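/- arXiv:1104.4356 — 2 statements merged into one kernel-verified Lean document; each statement's English description precedes it below -/
import Mathlib

section
/- Let a, b be reals with 1 < a ≤ b, and let B₂, C₂ : [a,b] → ℝ_{>1} be continuously differentiable with B₂(p) < C₂(p) for all p ∈ [a,b]. Define Ê(t) = (1/(8π))·√t·ln t and h(p) = ∫_{B₂(p)}^{C₂(p)} dq/ln q + Ê(B₂(p)) + Ê(C₂(p)). If B₂ is weakly decreasing and C₂ is weakly increasing on [a,b], then h is weakly increasing on [a,b]; if instead B₂ is weakly increasing and C₂ is weakly decreasing, then h is weakly decreasing on [a,b]. -/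
open MeasureTheory Set

/-- The error bound `Ê(t) = √t · ln t / (8π)`. -/
noncomputable def Ehat (t : ℝ) : ℝ := Real.sqrt t * Real.log t / (8 * Real.pi)

/-- The function `h(p) = ∫_{B₂(p)}^{C₂(p)} dq / ln q + Ê(B₂(p)) + Ê(C₂(p))`. -/
noncomputable def hFun (B₂ C₂ : ℝ → ℝ) (p : ℝ) : ℝ :=
  (∫ q in (B₂ p)..(C₂ p), 1 / Real.log q) + Ehat (B₂ p) + Ehat (C₂ p)

/-!
Differentiating gives `Ê'(t) = (log t + 2) / (16π√t)`, and the exponential lower bound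
`√t = exp (log t / 2) ≥ 1 + (log t) / 2 + (log t)² / 8` yields `Ê'(t) ≤ 1 / log t` for `t > 1`.
So lowering the lower endpoint of `∫ dq / log q` gains at least as much integral as `Ê` loses
there, while raising the upper endpoint increases both the integral and `Ê`. Hence `h(p)` grows
with the interval `[B₂(p), C₂(p)]`.
-/

lemma quadratic_log_half_le_sqrt {t : ℝ} (ht : 1 ≤ t) :
    1 + Real.log t / 2 + (Real.log t / 2) ^ 2 / 2 ≤ √t := by
  have ht₀ : 0 < t := by linarith
  have hlog : 0 ≤ Real.log t := Real.log_nonneg ht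
  calc 1 + Real.log t / 2 + (Real.log t / 2) ^ 2 / 2
      ≤ Real.exp (Real.log t / 2) := Real.quadratic_le_exp_of_nonneg (by positivity)
    _ = √t := by rw [← Real.log_sqrt ht₀.le, Real.exp_log (Real.sqrt_pos.2 ht₀)]

lemma intervalIntegrable_one_div_log {x y : ℝ} (hx : 1 < x) (hy : 1 < y) :
    IntervalIntegrable (fun q => 1 / Real.log q) volume x y := by
  have one_lt : ∀ q ∈ uIcc x y, 1 < q := fun q hq => (lt_min hx hy).trans_le hq.1
  have hlog : ContinuousOn Real.log (uIcc x y) :=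
    continuousOn_id.log fun q hq => (zero_lt_one.trans (one_lt q hq)).ne'
  exact (continuousOn_const.div hlog fun q hq =>
    (Real.log_pos (one_lt q hq)).ne').intervalIntegrable

lemma hasDerivAt_Ehat {t : ℝ} (ht : 0 < t) :
    HasDerivAt Ehat ((Real.log t + 2) / (16 * Real.pi * √t)) t := by
  have hinv : t⁻¹ = (√t)⁻¹ * (√t)⁻¹ := by rw [← mul_inv, Real.mul_self_sqrt ht.le]
  refine (((Real.hasDerivAt_sqrt ht.ne').mul (Real.hasDerivAt_log ht.ne')).div_const
    (8 * Real.pi)).congr_deriv ?_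
  rw [hinv]
  field_simp
  ring

lemma deriv_Ehat_le_one_div_log {t : ℝ} (ht : 1 < t) : deriv Ehat t ≤ 1 / Real.log t := by
  have ht₀ : 0 < t := by linarith
  have hlog : 0 < Real.log t := Real.log_pos ht
  rw [(hasDerivAt_Ehat ht₀).deriv, div_le_div_iff₀ (by positivity) hlog]
  calc (Real.log t + 2) * Real.log t
      ≤ 8 * (1 + Real.log t / 2 + (Real.log t / 2) ^ 2 / 2) := by linarith
    _ ≤ 8 * √t := by gcongr; exact quadratic_log_half_le_sqrt ht.le
    _ ≤ 1 * (16 * Real.pi * √t) := by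
      rw [one_mul]
      gcongr
      linarith [Real.pi_gt_three]

lemma monotoneOn_Ehat : MonotoneOn Ehat (Ici 1) := by
  intro x hx y _ hxy
  have hx₀ : 0 < x := zero_lt_one.trans_le hx
  have hlog : 0 ≤ Real.log x := Real.log_nonneg hx
  unfold Ehat
  gcongr

lemma Ehat_sub_le_integral {x y : ℝ} (hx : 1 < x) (hxy : x ≤ y) :
    Ehat y - Ehat x ≤ ∫ q in x..y, 1 / Real.log q := by
  have hasDerivAt_of_one_lt : ∀ t, 1 < t → HasDerivAt Ehat (deriv Ehat t) t := fun t ht =>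
    (hasDerivAt_Ehat (zero_lt_one.trans ht)).differentiableAt.hasDerivAt
  refine intervalIntegral.sub_le_integral_of_hasDeriv_right_of_le hxy
    (fun t ht => (hasDerivAt_of_one_lt t (hx.trans_le ht.1)).continuousAt.continuousWithinAt)
    (fun t ht => (hasDerivAt_of_one_lt t (hx.trans ht.1)).hasDerivWithinAt) ?_
    (fun t ht => deriv_Ehat_le_one_div_log (hx.trans ht.1))
  exact (intervalIntegrable_iff_integrableOn_Icc_of_le hxy).1
    (intervalIntegrable_one_div_log hx (hx.trans_le hxy))

lemma antitoneOn_integral_add_Ehat_left {y : ℝ} (hy : 1 < y) :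
    AntitoneOn (fun x => (∫ q in x..y, 1 / Real.log q) + Ehat x) (Ioi 1) := by
  intro x hx x' hx' hxx'
  have hsplit := intervalIntegral.integral_add_adjacent_intervals
    (intervalIntegrable_one_div_log hx hx') (intervalIntegrable_one_div_log hx' hy)
  have hgain := Ehat_sub_le_integral hx hxx'
  dsimp only
  linarith

lemma monotoneOn_integral_one_div_log_right {x : ℝ} (hx : 1 < x) :
    MonotoneOn (fun y => ∫ q in x..y, 1 / Real.log q) (Ioi 1) := by
  intro y hy y' hy' hyy'
  have hsplit := intervalIntegral.integral_add_adjacent_intervals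
    (intervalIntegrable_one_div_log hx hy) (intervalIntegrable_one_div_log hy hy')
  have hnonneg : 0 ≤ ∫ q in y..y', 1 / Real.log q :=
    intervalIntegral.integral_nonneg hyy' fun q hq =>
      one_div_nonneg.2 (Real.log_nonneg (hy.le.trans hq.1))
  dsimp only
  linarith

lemma integral_add_Ehat_add_Ehat_le {x x' y y' : ℝ} (hx' : 1 < x') (hxx' : x' ≤ x)
    (hy : 1 < y) (hyy' : y ≤ y') :
    (∫ q in x..y, 1 / Real.log q) + Ehat x + Ehat y ≤
      (∫ q in x'..y', 1 / Real.log q) + Ehat x' + Ehat y' := by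
  have hlower : (∫ q in x..y, 1 / Real.log q) + Ehat x ≤
      (∫ q in x'..y, 1 / Real.log q) + Ehat x' :=
    antitoneOn_integral_add_Ehat_left hy hx' (hx'.trans_le hxx') hxx'
  have hupper : ∫ q in x'..y, 1 / Real.log q ≤ ∫ q in x'..y', 1 / Real.log q :=
    monotoneOn_integral_one_div_log_right hx' hy (hy.trans_le hyy') hyy'
  have hEhat : Ehat y ≤ Ehat y' := monotoneOn_Ehat hy.le (hy.le.trans hyy') hyy'
  linarith

theorem monotonicity_criterion_general {α : Type*} [Preorder α] {s : Set α} {B C : α → ℝ}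
    (hB : ∀ p ∈ s, 1 < B p) (hC : ∀ p ∈ s, 1 < C p) :
    (AntitoneOn B s → MonotoneOn C s →
      MonotoneOn
        (fun p => (∫ q in (B p)..(C p), 1 / Real.log q) + Ehat (B p) + Ehat (C p)) s) ∧
    (MonotoneOn B s → AntitoneOn C s →
      AntitoneOn
        (fun p => (∫ q in (B p)..(C p), 1 / Real.log q) + Ehat (B p) + Ehat (C p)) s) := by
  constructor
  · intro hB_anti hC_mono p hp r hr hpr
    exact integral_add_Ehat_add_Ehat_le (hB r hr) (hB_anti hp hr hpr) (hC p hp)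
      (hC_mono hp hr hpr)
  · intro hB_mono hC_anti p hp r hr hpr
    exact integral_add_Ehat_add_Ehat_le (hB p hp) (hB_mono hp hr hpr) (hC r hr)
      (hC_anti hp hr hpr)

/-- Analytic core of the monotonicity criterion (Lemma 3.4 of the paper). -/
theorem monotonicity_criterion
    (a b : ℝ) (ha : 1 < a) (hab : a ≤ b)
    (B₂ C₂ : ℝ → ℝ)
    (hB₂_diff : ContDiffOn ℝ 1 B₂ (Set.Icc a b))
    (hC₂_diff : ContDiffOn ℝ 1 C₂ (Set.Icc a b))
    (hB₂_gt : ∀ p ∈ Set.Icc a b, 1 < B₂ p)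
    (hBC : ∀ p ∈ Set.Icc a b, B₂ p < C₂ p) :
    (AntitoneOn B₂ (Set.Icc a b) → MonotoneOn C₂ (Set.Icc a b) →
      MonotoneOn (hFun B₂ C₂) (Set.Icc a b)) ∧
    (MonotoneOn B₂ (Set.Icc a b) → AntitoneOn C₂ (Set.Icc a b) →
      AntitoneOn (hFun B₂ C₂) (Set.Icc a b)) := by
  exact monotonicity_criterion_general hB₂_gt fun p hp => (hB₂_gt p hp).trans (hBC p hp)
end

section
/- Assume the Riemann Hypothesis. There exists an absolute constant C > 0 such that for all real r and x with r > 1, ln x > 2·ln r, and √x / r ≥ 2657, there exists ã ∈ [(1 − ln r/(ln x + ln r))², (1 + 2·ln r/(ln x − 2·ln r))²] with |N^{DM}_r(x) − ã·(4x/ln²x)·(ln r − (ln r)/r)| ≤ C·x^{3/4}·r^{1/2}, where N^{DM}_r(x) = #{(p,q) : p, q prime, p/r < q < r·p and x/r < p·q ≤ x}. -/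
/-- Prime-pair count of the de Weger notion: ordered pairs of primes `(p,q)` with
`p/r < q < r·p` and `x/r < p·q ≤ x`. -/
noncomputable def NDM (r x : ℝ) : ℕ :=
  Nat.card {pq : ℕ × ℕ // pq.1.Prime ∧ pq.2.Prime ∧
    (pq.1 : ℝ) / r < (pq.2 : ℝ) ∧ (pq.2 : ℝ) < r * (pq.1 : ℝ) ∧
    x / r < (pq.1 : ℝ) * (pq.2 : ℝ) ∧ (pq.1 : ℝ) * (pq.2 : ℝ) ≤ x}

/-!
Weight each prime pair `(p, q)` by `log p * log q`, which the defining inequalities confine to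
`[L (L - 2 R) / 4, L² / 4]` for `L = log x`, `R = log r`. The weighted count `W` has main term
`A = ∬ dt du = x (log r - log r / r)`, the area of the region. Write `T(t)` and `v(t)` for the
`log`-weighted prime count and the length of the slice of the region over `t`. As the region is
symmetric, `∑ log p * v(p) = ∫ T(t) dt`, so that
`W - A = ∑ log p * (T(p) - v(p)) + ∫ (T(t) - v(t)) dt`, and only the size of `T - v` matters.

A slice is a difference of two intervals, so `T(t) - v(t)` is `O((x / t) ^ (3 / 5))` as soon as
`θ(y) - y = O(y ^ (3 / 5))`. Under the Riemann hypothesis this follows, without the explicit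
formula, from Borel–Carathéodory: `ζ'/ζ(s)` is `O(|s| ^ ε)` to the right of the critical line, so
the contour in Perron's formula for the primitive of `ψ(u) - u` can be moved there, and differencing
recovers `ψ`.

The resulting error in the count is `O((1 - 1 / r) x ^ (4 / 5) r ^ (1 / 5))` up to admissible terms.
It is either `O(x ^ (3 / 4) r ^ (1 / 2))` or smaller than the distance, of order `A R / L³`, between
the bounds `4 A / L²`, `4 A / (L (L - 2 R))` and the endpoints `4 A / (L + R)²`, `4 A / (L - 2 R)²`
of the permitted range.
-/

section

open Complex MeasureTheory Set Filter Topology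

/-! ### The transform `∫₁^∞ f(u) u⁻⁽ˢ⁺¹⁾ du` -/

/-- The Mellin transform of the restriction of `f` to `(1, ∞)`, in the normalization in which the
summatory function `f` of a Dirichlet series `D` has transform `D(s) / s`. -/
noncomputable def tailMellin (f : ℝ → ℂ) (s : ℂ) : ℂ :=
  ∫ u in Ioi (1 : ℝ), f u * (u : ℂ) ^ (-(s + 1))

section TailMellin

variable {f : ℝ → ℂ} {C a : ℝ} {s : ℂ}

lemma continuousOn_ofReal_cpow_const (w : ℂ) :
    ContinuousOn (fun u : ℝ => (u : ℂ) ^ w) (Ioi 0) := fun u hu =>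
  (continuousAt_ofReal_cpow_const u w (Or.inr (mem_Ioi.mp hu).ne')).continuousWithinAt

lemma norm_mul_cpow_le (hf : ∀ u, 1 < u → ‖f u‖ ≤ C * u ^ a) (w : ℂ) {u : ℝ} (hu : 1 < u) :
    ‖f u * (u : ℂ) ^ w‖ ≤ C * u ^ (a + w.re) := by
  have hu0 : 0 < u := zero_lt_one.trans hu
  rw [norm_mul, norm_cpow_eq_rpow_re_of_pos hu0, Real.rpow_add hu0, ← mul_assoc]
  gcongr
  exact hf u hu

lemma integrableOn_Ioi_mul_cpow (hfm : Measurable f) (hf : ∀ u, 1 < u → ‖f u‖ ≤ C * u ^ a)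
    {w : ℂ} (hw : a + w.re < -1) :
    IntegrableOn (fun u : ℝ => f u * (u : ℂ) ^ w) (Ioi 1) := by
  refine ((integrableOn_Ioi_rpow_of_lt hw one_pos).const_mul C).mono'
    (hfm.aestronglyMeasurable.mul ?_) ?_
  · exact ((continuousOn_ofReal_cpow_const w).mono
      (Ioi_subset_Ioi zero_le_one)).aestronglyMeasurable measurableSet_Ioi
  · filter_upwards [ae_restrict_mem measurableSet_Ioi] with u hu
    exact norm_mul_cpow_le hf w hu

lemma norm_tailMellin_le (hf : ∀ u, 1 < u → ‖f u‖ ≤ C * u ^ a) (hs : a < s.re) :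
    ‖tailMellin f s‖ ≤ C / (s.re - a) := by
  have hexp : a + (-(s + 1)).re < -1 := by simp only [neg_re, add_re, one_re]; linarith
  calc ‖tailMellin f s‖ ≤ ∫ u in Ioi (1 : ℝ), C * u ^ (a + (-(s + 1)).re) := by
        refine norm_integral_le_of_norm_le
          ((integrableOn_Ioi_rpow_of_lt hexp one_pos).const_mul C) ?_
        filter_upwards [ae_restrict_mem measurableSet_Ioi] with u hu
        exact norm_mul_cpow_le hf _ hu
    _ = C / (s.re - a) := by
        rw [integral_const_mul, integral_Ioi_rpow_of_lt hexp one_pos, Real.one_rpow,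
          show a + (-(s + 1)).re + 1 = -(s.re - a) by simp; ring, neg_div_neg_eq, mul_one_div]

lemma cpow_smul_indicator_Ioi_one (f : ℝ → ℂ) (s : ℂ) :
    (fun u : ℝ => (u : ℂ) ^ (-s - 1) • (Ioi (1 : ℝ)).indicator f u) =
      (Ioi (1 : ℝ)).indicator fun u => f u * (u : ℂ) ^ (-(s + 1)) := by
  ext u
  rw [← neg_add', smul_eq_mul, mul_comm]
  exact (indicator_mul_left (Ioi 1) f (fun u : ℝ => (u : ℂ) ^ (-(s + 1)))).symm

lemma tailMellin_eq_mellin (f : ℝ → ℂ) (s : ℂ) :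
    tailMellin f s = mellin ((Ioi (1 : ℝ)).indicator f) (-s) := by
  rw [mellin, cpow_smul_indicator_Ioi_one, setIntegral_indicator measurableSet_Ioi,
    inter_eq_right.mpr (Ioi_subset_Ioi zero_le_one), tailMellin]

lemma mellinConvergent_indicator_Ioi_one :
    MellinConvergent ((Ioi (1 : ℝ)).indicator f) (-s) ↔
      IntegrableOn (fun u : ℝ => f u * (u : ℂ) ^ (-(s + 1))) (Ioi 1) := by
  rw [MellinConvergent, cpow_smul_indicator_Ioi_one, IntegrableOn,
    integrable_indicator_iff measurableSet_Ioi, IntegrableOn,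
    Measure.restrict_restrict measurableSet_Ioi,
    inter_eq_left.mpr (Ioi_subset_Ioi zero_le_one), IntegrableOn]

lemma differentiableAt_tailMellin (hfm : Measurable f) (hf : ∀ u, 1 < u → ‖f u‖ ≤ C * u ^ a)
    (hs : a < s.re) : DifferentiableAt ℂ (tailMellin f) s := by
  set g : ℝ → ℂ := (Ioi (1 : ℝ)).indicator f
  have hg_of_le : ∀ u ≤ 1, g u = 0 := fun _ hu => indicator_of_notMem (not_lt.mpr hu) f
  have hg_bound : ∀ u, ‖g u‖ ≤ ‖C * u ^ a‖ := by
    intro u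
    by_cases h1 : 1 < u
    · exact (norm_indicator_le_norm_self f u).trans ((hf u h1).trans (le_abs_self _))
    · rw [hg_of_le u (not_lt.mp h1), norm_zero]
      exact norm_nonneg _
  have hg_loc : LocallyIntegrableOn g (Ioi 0) := by
    have hpow : ContinuousOn (fun u : ℝ => C * u ^ a) (Ioi 0) := fun u hu =>
      ((Real.continuousAt_rpow_const u a (Or.inl (mem_Ioi.mp hu).ne')).const_mul
        C).continuousWithinAt
    refine (locallyIntegrableOn_iff isOpen_Ioi.isLocallyClosed).mpr fun k hk hkc => ?_
    refine Integrable.mono ((hpow.mono hk).integrableOn_compact hkc)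
      (hfm.indicator measurableSet_Ioi).aestronglyMeasurable
      (Eventually.of_forall hg_bound)
  have hmellin : DifferentiableAt ℂ (mellin g) (-s) := by
    refine mellin_differentiableAt_of_isBigO_rpow (a := -a) (b := (-s).re - 1) hg_loc
      (Asymptotics.IsBigO.of_bound ‖C‖ ?_) (by simpa using hs)
      (Asymptotics.IsBigO.of_bound 1 ?_) (by linarith)
    · exact Eventually.of_forall fun u => by simpa using hg_bound u
    · filter_upwards [nhdsWithin_le_nhds (Iio_mem_nhds one_pos)] with u hu
      simp [hg_of_le u (mem_Iio.mp hu).le]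
  rw [funext (tailMellin_eq_mellin f)]
  exact hmellin.comp s differentiableAt_id.neg

end TailMellin

section FubiniKernel

variable {g : ℝ → ℂ} {s : ℂ}

/-- The kernel `1_{v < u} g(v) u⁻⁽ˢ⁺¹⁾` whose two iterated integrals express that the transform
turns integration into division by `s`. -/
noncomputable def primitiveKernel (g : ℝ → ℂ) (s : ℂ) (v u : ℝ) : ℂ :=
  (Ioi v).indicator (fun u : ℝ => g v * (u : ℂ) ^ (-(s + 1))) u

lemma measurable_uncurry_primitiveKernel (hg : Measurable g) :
    Measurable (Function.uncurry (primitiveKernel g s)) := by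
  have hkernel : Function.uncurry (primitiveKernel g s) = {p : ℝ × ℝ | p.1 < p.2}.indicator
      fun p => g p.1 * (p.2 : ℂ) ^ (-(s + 1)) := by
    ext p
    simp [Function.uncurry, primitiveKernel, indicator]
  rw [hkernel]
  exact ((hg.comp measurable_fst).mul ((Complex.measurable_ofReal.comp
    measurable_snd).pow_const _)).indicator (measurableSet_lt measurable_fst measurable_snd)

lemma integrableOn_primitiveKernel (hs : 0 < s.re) {v : ℝ} (hv : 1 < v) :
    IntegrableOn (primitiveKernel g s v) (Ioi 1) := by
  have hcpow : IntegrableOn (fun u : ℝ => g v * (u : ℂ) ^ (-(s + 1))) (Ioi v) :=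
    (integrableOn_Ioi_cpow_of_lt (by simpa using hs) (zero_lt_one.trans hv)).const_mul _
  exact (hcpow.integrable_indicator measurableSet_Ioi).integrableOn

lemma integral_primitiveKernel_right (hs : 0 < s.re) {v : ℝ} (hv : 1 < v) :
    ∫ u in Ioi (1 : ℝ), primitiveKernel g s v u = g v * (v : ℂ) ^ (-s) / s := by
  simp only [primitiveKernel]
  rw [setIntegral_indicator measurableSet_Ioi, inter_eq_right.mpr (Ioi_subset_Ioi hv.le),
    integral_const_mul, integral_Ioi_cpow_of_lt (by simpa using hs) (zero_lt_one.trans hv),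
    show -(s + 1) + 1 = -s by ring, neg_div_neg_eq, mul_div_assoc]

lemma integral_norm_primitiveKernel_right (hs : 0 < s.re) {v : ℝ} (hv : 1 < v) :
    ∫ u in Ioi (1 : ℝ), ‖primitiveKernel g s v u‖ = ‖g v * (v : ℂ) ^ (-s)‖ / s.re := by
  have hv0 : 0 < v := zero_lt_one.trans hv
  have hnorm : EqOn (fun u : ℝ => ‖g v * (u : ℂ) ^ (-(s + 1))‖)
      (fun u => ‖g v‖ * u ^ (-(s.re + 1))) (Ioi v) := fun u hu => by
    simp only [norm_mul, norm_cpow_eq_rpow_re_of_pos (hv0.trans hu), neg_re, add_re, one_re]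
  simp only [primitiveKernel, norm_indicator_eq_indicator_norm]
  rw [setIntegral_indicator measurableSet_Ioi, inter_eq_right.mpr (Ioi_subset_Ioi hv.le),
    setIntegral_congr_fun measurableSet_Ioi hnorm, integral_const_mul,
    integral_Ioi_rpow_of_lt (by linarith) hv0, norm_mul, norm_cpow_eq_rpow_re_of_pos hv0,
    show -(s.re + 1) + 1 = -s.re by ring, neg_div_neg_eq, neg_re, mul_div_assoc]

lemma integral_primitiveKernel_left {u : ℝ} (hu : 1 < u) :
    ∫ v in Ioi (1 : ℝ), primitiveKernel g s v u =
      (∫ v in (1 : ℝ)..u, g v) * (u : ℂ) ^ (-(s + 1)) := by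
  have hflip : (fun v => primitiveKernel g s v u) =
      (Iio u).indicator fun v => g v * (u : ℂ) ^ (-(s + 1)) := by
    ext v
    simp [primitiveKernel, indicator]
  rw [hflip, setIntegral_indicator measurableSet_Iio, integral_mul_const, Ioi_inter_Iio,
    intervalIntegral.integral_of_le hu.le, ← integral_Ioc_eq_integral_Ioo]

lemma tailMellin_primitive (hg : Measurable g) (hs : 0 < s.re)
    (hint : IntegrableOn (fun v : ℝ => g v * (v : ℂ) ^ (-s)) (Ioi 1)) :
    tailMellin (fun u => ∫ v in (1 : ℝ)..u, g v) s = tailMellin g (s - 1) / s := by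
  have hkernel : Integrable (Function.uncurry (primitiveKernel g s))
      ((volume.restrict (Ioi (1 : ℝ))).prod (volume.restrict (Ioi (1 : ℝ)))) := by
    rw [integrable_prod_iff (measurable_uncurry_primitiveKernel hg).aestronglyMeasurable]
    constructor
    · filter_upwards [ae_restrict_mem measurableSet_Ioi] with v hv
      exact integrableOn_primitiveKernel hs hv
    · exact IntegrableOn.congr_fun (hint.norm.div_const s.re)
        (fun v hv => (integral_norm_primitiveKernel_right hs hv).symm) measurableSet_Ioi
  calc tailMellin (fun u => ∫ v in (1 : ℝ)..u, g v) s
      = ∫ u in Ioi (1 : ℝ), ∫ v in Ioi (1 : ℝ), primitiveKernel g s v u :=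
        setIntegral_congr_fun measurableSet_Ioi fun u hu =>
          (integral_primitiveKernel_left hu).symm
    _ = ∫ v in Ioi (1 : ℝ), ∫ u in Ioi (1 : ℝ), primitiveKernel g s v u :=
        (integral_integral_swap hkernel).symm
    _ = ∫ v in Ioi (1 : ℝ), g v * (v : ℂ) ^ (-s) / s :=
        setIntegral_congr_fun measurableSet_Ioi fun v hv => integral_primitiveKernel_right hs hv
    _ = tailMellin g (s - 1) / s := by rw [integral_div, tailMellin, sub_add_cancel]

end FubiniKernel

lemma eq_integral_vertical_tailMellin {f : ℝ → ℂ} {σ x : ℝ} (hx : 1 < x)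
    (hint : IntegrableOn (fun u : ℝ => f u * (u : ℂ) ^ (-(σ + 1 : ℂ))) (Ioi 1))
    (hvert : Integrable fun y : ℝ => tailMellin f (σ + y * I)) (hf : ContinuousAt f x) :
    f x = (1 / (2 * Real.pi)) • ∫ y : ℝ, (x : ℂ) ^ (σ + y * I : ℂ) * tailMellin f (σ + y * I) := by
  set g : ℝ → ℂ := (Ioi (1 : ℝ)).indicator f
  have hmellin : ∀ y : ℝ, mellin g ((-σ : ℝ) + y * I) = tailMellin f (σ + (-y : ℝ) * I) := by
    intro y
    rw [tailMellin_eq_mellin]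
    congr 1
    push_cast
    ring
  have hconv : MellinConvergent g (-σ : ℝ) := by
    rw [ofReal_neg]
    exact mellinConvergent_indicator_Ioi_one.mpr hint
  have hgf : g =ᶠ[𝓝 x] f := by
    filter_upwards [Ioi_mem_nhds hx] with u hu
    exact indicator_of_mem hu f
  have hinv := mellinInv_mellin_eq (-σ) g (zero_lt_one.trans hx) hconv
    (hvert.comp_neg.congr (Eventually.of_forall fun y => (hmellin y).symm)) (hf.congr hgf.symm)
  rw [hgf.eq_of_nhds, mellinInv] at hinv
  rw [← hinv, ← integral_neg_eq_self]
  congr 2 with y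
  rw [hmellin, smul_eq_mul]
  push_cast
  ring_nf

section ContourShift

variable {f : ℂ → ℂ} {σ₁ σ₂ B β : ℝ}

lemma integrable_vertical_of_norm_le {σ : ℝ} (hf : ContinuousOn f {s | s.re = σ}) (hβ : 1 < β)
    (hB : ∀ s : ℂ, s.re = σ → ‖f s‖ ≤ B * (1 + |s.im|) ^ (-β)) :
    Integrable fun y : ℝ => f (σ + y * I) := by
  have hdom : Integrable fun y : ℝ => B * (1 + ‖y‖) ^ (-β) :=
    (integrable_one_add_norm (by simpa using hβ)).const_mul B
  refine hdom.mono' (hf.comp_continuous (by fun_prop) fun y => by simp).aestronglyMeasurable ?_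
  filter_upwards with y
  simpa using hB (σ + y * I) (by simp)

lemma tendsto_integral_horizontal (hβ : 0 < β) (hσ : σ₁ ≤ σ₂)
    (hB : ∀ s : ℂ, s.re ∈ Icc σ₁ σ₂ → ‖f s‖ ≤ B * (1 + |s.im|) ^ (-β))
    {τ : ℝ → ℝ} (hτ : ∀ T, |τ T| = |T|) :
    Tendsto (fun T : ℝ => ∫ x in σ₁..σ₂, f (x + τ T * I)) atTop (𝓝 0) := by
  have hdecay : Tendsto (fun T : ℝ => B * (1 + |T|) ^ (-β) * |σ₂ - σ₁|) atTop (𝓝 0) := by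
    have hpow := (tendsto_rpow_neg_atTop hβ).comp
      (tendsto_atTop_add_const_left _ 1 tendsto_abs_atTop_atTop)
    simpa using (hpow.const_mul B).mul_const |σ₂ - σ₁|
  refine squeeze_zero_norm (fun T => ?_) hdecay
  refine intervalIntegral.norm_integral_le_of_norm_le_const fun x hx => ?_
  rw [uIoc_of_le hσ] at hx
  simpa [hτ] using hB (x + τ T * I) (by simpa using ⟨hx.1.le, hx.2⟩)

lemma integral_vertical_eq_of_norm_le (hσ : σ₁ ≤ σ₂)
    (hf : DifferentiableOn ℂ f {s | s.re ∈ Icc σ₁ σ₂}) (hβ : 1 < β)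
    (hB : ∀ s : ℂ, s.re ∈ Icc σ₁ σ₂ → ‖f s‖ ≤ B * (1 + |s.im|) ^ (-β)) :
    ∫ y : ℝ, f (σ₂ + y * I) = ∫ y : ℝ, f (σ₁ + y * I) := by
  have hvert : ∀ σ ∈ Icc σ₁ σ₂, Tendsto (fun T : ℝ => ∫ y in (-T)..T, f (σ + y * I)) atTop
      (𝓝 (∫ y : ℝ, f (σ + y * I))) := fun σ hmem =>
    intervalIntegral_tendsto_integral
      (integrable_vertical_of_norm_le
        (hf.continuousOn.mono fun s (hs : s.re = σ) =>
          show s.re ∈ Icc σ₁ σ₂ from hs ▸ hmem) hβ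
        fun s hs => hB s (hs ▸ hmem))
      tendsto_neg_atTop_atBot tendsto_id
  have hhor := fun τ : ℝ → ℝ => tendsto_integral_horizontal (τ := τ) (zero_lt_one.trans hβ) hσ hB
  have hrect : ∀ T : ℝ, (∫ x in σ₁..σ₂, f (x + (-T : ℝ) * I)) - (∫ x in σ₁..σ₂, f (x + T * I))
      + I • (∫ y in (-T)..T, f (σ₂ + y * I)) - I • ∫ y in (-T)..T, f (σ₁ + y * I) = 0 := by
    intro T
    refine integral_boundary_rect_eq_zero_of_differentiableOn f ⟨σ₁, -T⟩ ⟨σ₂, T⟩ (hf.mono ?_)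
    intro s hs
    have hre := (mem_reProdIm.mp hs).1
    rwa [uIcc_of_le hσ] at hre
  have hlim := (((hhor (fun T => -T) abs_neg).sub (hhor id fun _ => rfl)).add
    ((hvert σ₂ (right_mem_Icc.mpr hσ)).const_smul I)).sub
    ((hvert σ₁ (left_mem_Icc.mpr hσ)).const_smul I)
  have hzero := tendsto_nhds_unique hlim ((tendsto_congr hrect).mpr tendsto_const_nhds)
  simpa [← mul_sub, sub_eq_zero] using hzero

end ContourShift

section TailMellinLinear

variable {f g : ℝ → ℂ} {s : ℂ}

lemma tailMellin_sub (hf : IntegrableOn (fun u : ℝ => f u * (u : ℂ) ^ (-(s + 1))) (Ioi 1))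
    (hg : IntegrableOn (fun u : ℝ => g u * (u : ℂ) ^ (-(s + 1))) (Ioi 1)) :
    tailMellin (fun u => f u - g u) s = tailMellin f s - tailMellin g s := by
  simp only [tailMellin, sub_mul, integral_sub hf hg]

lemma cpow_mul_cpow_neg_add_one (w : ℂ) {u : ℝ} (hu : 1 < u) :
    (u : ℂ) ^ w * (u : ℂ) ^ (-(s + 1)) = (u : ℂ) ^ (w - s - 1) := by
  rw [← cpow_add _ _ (ofReal_ne_zero.mpr (zero_lt_one.trans hu).ne')]
  ring_nf

lemma integrableOn_cpow_mul_cpow {w : ℂ} (hw : w.re < s.re) :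
    IntegrableOn (fun u : ℝ => (u : ℂ) ^ w * (u : ℂ) ^ (-(s + 1))) (Ioi 1) :=
  (integrableOn_Ioi_cpow_of_lt (a := w - s - 1) (by simp; linarith) one_pos).congr_fun
    (fun _ hu => (cpow_mul_cpow_neg_add_one w hu).symm) measurableSet_Ioi

lemma tailMellin_cpow {w : ℂ} (hw : w.re < s.re) :
    tailMellin (fun u => (u : ℂ) ^ w) s = 1 / (s - w) := by
  rw [tailMellin, setIntegral_congr_fun measurableSet_Ioi
    fun u hu => cpow_mul_cpow_neg_add_one w hu,
    integral_Ioi_cpow_of_lt (by simp; linarith) one_pos, ofReal_one, one_cpow,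
    show w - s - 1 + 1 = -(s - w) by ring, neg_div_neg_eq]

end TailMellinLinear

/-! ### The entire function `(s - 1) ζ(s)` -/

lemma measurable_ofReal_fract : Measurable fun u : ℝ => ((Int.fract u : ℝ) : ℂ) :=
  Complex.measurable_ofReal.comp measurable_fract

lemma norm_ofReal_fract_le (u : ℝ) : ‖((Int.fract u : ℝ) : ℂ)‖ ≤ 1 * u ^ (0 : ℝ) := by
  rw [norm_real, Real.norm_of_nonneg (Int.fract_nonneg u), Real.rpow_zero, mul_one]
  exact (Int.fract_lt_one u).le

lemma ne_of_re_lt_re {s w : ℂ} (h : w.re < s.re) : s ≠ w :=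
  fun hsw => h.ne' (congrArg re hsw)

lemma riemannZeta_eq_mul_tailMellin_floor {s : ℂ} (hs : 1 < s.re) :
    riemannZeta s = s * tailMellin (fun u => (⌊u⌋₊ : ℂ)) s := by
  have hL := LSeries_eq_mul_integral_of_nonneg (fun _ => 1) (r := 1) zero_le_one hs
    (by simpa using Asymptotics.isBigO_refl _ _) fun _ => zero_le_one
  rw [← LSeries_one_eq_riemannZeta hs]
  simpa [tailMellin, Pi.one_def] using hL

lemma riemannZeta₁_eq_sub_mul_tailMellin_fract_of_one_lt_re {s : ℂ} (hs : 1 < s.re) :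
    riemannZeta₁ s = s - s * (s - 1) * tailMellin (fun u => (Int.fract u : ℝ)) s := by
  have hs1 : s ≠ 1 := ne_of_re_lt_re hs
  have hfloor : tailMellin (fun u => (⌊u⌋₊ : ℂ)) s =
      1 / (s - 1) - tailMellin (fun u => (Int.fract u : ℝ)) s := by
    have hu : EqOn (fun u : ℝ => (⌊u⌋₊ : ℂ) * (u : ℂ) ^ (-(s + 1)))
        (fun u : ℝ => ((u : ℂ) ^ (1 : ℂ) - (Int.fract u : ℝ)) * (u : ℂ) ^ (-(s + 1))) (Ioi 1) := by
      intro u hu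
      have hu0 : 0 ≤ u := (zero_lt_one.trans hu).le
      simp only [cpow_one]
      rw [← ofReal_sub, Int.self_sub_fract, ← natCast_floor_eq_intCast_floor hu0, ofReal_natCast]
    rw [tailMellin, setIntegral_congr_fun measurableSet_Ioi hu, ← tailMellin_cpow (by simpa),
      ← tailMellin_sub (integrableOn_cpow_mul_cpow (by simpa))]
    · rfl
    · exact integrableOn_Ioi_mul_cpow measurable_ofReal_fract
        (fun u _ => norm_ofReal_fract_le u) (by simp; linarith)
  have hzeta : riemannZeta₁ s = (s - 1) * riemannZeta s := by
    rw [riemannZeta_eq_inv_sub_mul hs1, mul_inv_cancel_left₀ (sub_ne_zero.mpr hs1)]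
  rw [hzeta, riemannZeta_eq_mul_tailMellin_floor hs, hfloor]
  field_simp [sub_ne_zero.mpr hs1]

lemma riemannZeta₁_eq_sub_mul_tailMellin_fract {s : ℂ} (hs : 0 < s.re) :
    riemannZeta₁ s = s - s * (s - 1) * tailMellin (fun u => (Int.fract u : ℝ)) s := by
  have hU : IsOpen {s : ℂ | 0 < s.re} := isOpen_lt continuous_const continuous_re
  have hleft : AnalyticOnNhd ℂ riemannZeta₁ {s : ℂ | 0 < s.re} :=
    differentiable_riemannZeta₁.differentiableOn.analyticOnNhd hU
  have hright : AnalyticOnNhd ℂ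
      (fun s => s - s * (s - 1) * tailMellin (fun u => (Int.fract u : ℝ)) s)
      {s : ℂ | 0 < s.re} := by
    refine DifferentiableOn.analyticOnNhd (fun z hz => ?_) hU
    have := differentiableAt_tailMellin measurable_ofReal_fract
      (fun u _ => norm_ofReal_fract_le u) (mem_ofPred_eq ▸ hz)
    exact DifferentiableAt.differentiableWithinAt (by fun_prop)
  refine hleft.eqOn_of_preconnected_of_eventuallyEq hright
    (convex_halfSpace_re_gt 0).isPreconnected (z₀ := 2) (by simp) ?_ hs
  have hnhds : {s : ℂ | 1 < s.re} ∈ 𝓝 (2 : ℂ) :=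
    (isOpen_lt continuous_const continuous_re).mem_nhds (by simp)
  filter_upwards [hnhds] with z hz
  exact riemannZeta₁_eq_sub_mul_tailMellin_fract_of_one_lt_re hz

lemma norm_riemannZeta₁_le {s : ℂ} (hs : 1 / 2 < s.re) :
    ‖riemannZeta₁ s‖ ≤ 3 * (1 + ‖s‖) ^ 2 := by
  have hfract : ‖tailMellin (fun u => (Int.fract u : ℝ)) s‖ ≤ 2 := by
    refine (norm_tailMellin_le (fun u _ => norm_ofReal_fract_le u) (by linarith)).trans ?_
    rw [div_le_iff₀ (by linarith)]
    linarith
  have hsub : ‖s - 1‖ ≤ ‖s‖ + 1 := by simpa using norm_sub_le s 1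
  calc ‖riemannZeta₁ s‖
      ≤ ‖s‖ + ‖s‖ * ‖s - 1‖ * ‖tailMellin (fun u => (Int.fract u : ℝ)) s‖ := by
        rw [riemannZeta₁_eq_sub_mul_tailMellin_fract (by linarith), ← norm_mul, ← norm_mul]
        exact norm_sub_le _ _
    _ ≤ ‖s‖ + ‖s‖ * (‖s‖ + 1) * 2 := by gcongr
    _ ≤ 3 * (1 + ‖s‖) ^ 2 := by nlinarith [norm_nonneg s]

lemma riemannZeta₁_ne_zero_of_half_lt_re (hRH : RiemannHypothesis) {s : ℂ} (hs : 1 / 2 < s.re) :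
    riemannZeta₁ s ≠ 0 := by
  intro hzero
  by_cases h1 : s = 1
  · exact one_ne_zero (riemannZeta₁_one ▸ h1 ▸ hzero)
  · have hzeta : riemannZeta s = 0 := by rw [riemannZeta_eq_inv_sub_mul h1, hzero, mul_zero]
    refine hs.ne' (hRH s hzeta ?_ h1)
    rintro ⟨n, rfl⟩
    have hre : (-2 * (n + 1) : ℂ).re = -2 * (n + 1) := by simp
    have : (0 : ℝ) ≤ n := n.cast_nonneg
    linarith

lemma norm_LSeries_moebius_le_two {s : ℂ} (hs : s.re = 2) :
    ‖LSeries (fun n => ((ArithmeticFunction.moebius n : ℤ) : ℂ)) s‖ ≤ 2 := by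
  have hterm : ∀ n : ℕ, ‖LSeries.term (fun n => ((ArithmeticFunction.moebius n : ℤ) : ℂ)) s n‖ ≤
      1 / (n : ℝ) ^ 2 := by
    intro n
    rw [LSeries.norm_term_eq, hs, Real.rpow_two]
    split_ifs
    · positivity
    · gcongr
      rw [Complex.norm_intCast]
      exact_mod_cast ArithmeticFunction.abs_moebius_le_one
  refine (tsum_of_norm_bounded hasSum_zeta_two hterm).trans ?_
  nlinarith [Real.pi_pos, Real.pi_lt_d2]

lemma half_le_norm_riemannZeta₁ {s : ℂ} (hs : s.re = 2) : 1 / 2 ≤ ‖riemannZeta₁ s‖ := by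
  have hs1 : 1 < s.re := by rw [hs]; norm_num
  have hsub : ‖(s - 1)⁻¹‖ ≤ 1 := by
    rw [norm_inv]
    refine inv_le_one_of_one_le₀ ?_
    have hre := Complex.abs_re_le_norm (s - 1)
    rw [sub_re, hs, one_re] at hre
    norm_num at hre
    exact hre
  have hprod := congrArg norm (ArithmeticFunction.LSeries_zeta_mul_Lseries_moebius hs1)
  rw [ArithmeticFunction.LSeries_zeta_eq_riemannZeta hs1,
    riemannZeta_eq_inv_sub_mul (ne_of_re_lt_re hs1), norm_mul, norm_mul, norm_one] at hprod
  have hle : 1 ≤ 1 * ‖riemannZeta₁ s‖ * 2 := hprod.ge.trans <| by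
    gcongr
    exact norm_LSeries_moebius_le_two hs
  linarith

/-! ### Logarithmic derivatives -/

section LogDeriv

variable {F : ℂ → ℂ} {c : ℂ} {R : ℝ}

lemma exists_eq_mul_exp_of_ne_zero_on_ball (hF : DifferentiableOn ℂ F (Metric.ball c R))
    (hne : ∀ z ∈ Metric.ball c R, F z ≠ 0) :
    ∃ g : ℂ → ℂ, g c = 0 ∧ (∀ z ∈ Metric.ball c R, HasDerivAt g (logDeriv F z) z) ∧
      ∀ z ∈ Metric.ball c R, F z = F c * exp (g z) := by
  have hlogDeriv : DifferentiableOn ℂ (logDeriv F) (Metric.ball c R) :=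
    (hF.deriv Metric.isOpen_ball).div hF hne
  obtain ⟨g, hgc, hg⟩ := hlogDeriv.isExactOn_ball.with_val_at c 0
  refine ⟨g, hgc, hg, fun z hz => ?_⟩
  have hderiv : ∀ w ∈ Metric.ball c R, HasDerivAt (fun w => F w * exp (-g w)) 0 w := by
    intro w hw
    have hprod := (hF.differentiableAt (Metric.isOpen_ball.mem_nhds hw)).hasDerivAt.mul
      (hg w hw).neg.cexp
    have hcancel : F w * logDeriv F w = deriv F w := mul_div_cancel₀ _ (hne w hw)
    refine hprod.congr_deriv ?_
    linear_combination -exp (-g w) * hcancel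
  have hconst : F z * exp (-g z) = F c * exp (-g c) := by
    refine (convex_ball c R).is_const_of_fderivWithin_eq_zero (𝕜 := ℂ)
      (f := fun w => F w * exp (-g w))
      (fun w hw => (hderiv w hw).differentiableAt.differentiableWithinAt) (fun w hw => ?_) hz
      (Metric.mem_ball_self (Metric.nonempty_ball.mp ⟨z, hz⟩))
    rw [fderivWithin_of_isOpen Metric.isOpen_ball hw, (hderiv w hw).hasFDerivAt.fderiv]
    ext
    simp
  rw [hgc, neg_zero, exp_zero, mul_one] at hconst
  rw [← hconst, mul_assoc, ← exp_add, neg_add_cancel, exp_zero, mul_one]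

lemma norm_le_of_re_le_on_ball {g : ℂ → ℂ} {M : ℝ} (hM : 0 < M)
    (hg : DifferentiableOn ℂ g (Metric.ball c R)) (hgc : g c = 0)
    (hre : ∀ z ∈ Metric.ball c R, (g z).re ≤ M) {z : ℂ} (hz : z ∈ Metric.ball c R) :
    ‖g z‖ ≤ 2 * M * ‖z - c‖ / (R - ‖z - c‖) := by
  have hmaps : MapsTo (fun w => c + w) (Metric.ball 0 R) (Metric.ball c R) := fun w hw => by
    simpa [Metric.mem_ball, dist_eq] using hw
  have hbc := borelCaratheodory_zero (f := fun w => g (c + w)) (z := z - c) hM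
    (hg.comp (by fun_prop) hmaps) (fun w hw => hre _ (hmaps hw))
    (Metric.nonempty_ball.mp ⟨z, hz⟩) (by simpa [Metric.mem_ball, dist_eq] using hz)
    (by simpa using hgc)
  simpa using hbc

/- Borel–Carathéodory bounds `log (F / F c)` on the circle of radius `(R - ‖s - c‖) / 2` about `s`,
and Cauchy's estimate on this circle bounds its derivative at `s`. -/
lemma norm_logDeriv_le_of_norm_le_exp_mul {M : ℝ} (hM : 0 < M)
    (hF : DifferentiableOn ℂ F (Metric.ball c R)) (hne : ∀ z ∈ Metric.ball c R, F z ≠ 0)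
    (hbound : ∀ z ∈ Metric.ball c R, ‖F z‖ ≤ Real.exp M * ‖F c‖) {s : ℂ}
    (hs : s ∈ Metric.ball c R) :
    ‖logDeriv F s‖ ≤ 8 * M * R / (R - ‖s - c‖) ^ 2 := by
  obtain ⟨g, hgc, hg, hFg⟩ := exists_eq_mul_exp_of_ne_zero_on_ball hF hne
  have hsR : ‖s - c‖ < R := by simpa [dist_eq] using hs
  have hR : 0 < R := (norm_nonneg _).trans_lt hsR
  have hre : ∀ z ∈ Metric.ball c R, (g z).re ≤ M := by
    intro z hz
    have hFc : 0 < ‖F c‖ := norm_pos_iff.mpr (hne c (Metric.mem_ball_self hR))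
    have hz' := hbound z hz
    rw [hFg z hz, norm_mul, norm_exp, mul_comm] at hz'
    exact Real.exp_le_exp.mp (le_of_mul_le_mul_right hz' hFc)
  set ρ := (R - ‖s - c‖) / 2 with hρ
  have hρ0 : 0 < ρ := by linarith
  have hdist : ∀ z ∈ Metric.closedBall s ρ, ‖z - c‖ ≤ R - ρ := by
    intro z hz
    rw [Metric.mem_closedBall, dist_eq] at hz
    linarith [norm_sub_le_norm_sub_add_norm_sub z s c]
  have hmem : Metric.closedBall s ρ ⊆ Metric.ball c R := fun z hz => by
    rw [Metric.mem_ball, dist_eq]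
    linarith [hdist z hz]
  have hgdiff : DifferentiableOn ℂ g (Metric.ball c R) := fun z hz =>
    (hg z hz).differentiableAt.differentiableWithinAt
  have hcircle : ∀ z ∈ Metric.sphere s ρ, ‖g z‖ ≤ 2 * M * R / ρ := by
    intro z hz
    have hz' := Metric.sphere_subset_closedBall hz
    refine (norm_le_of_re_le_on_ball hM hgdiff hgc hre (hmem hz')).trans ?_
    gcongr
    all_goals linarith [hdist z hz']
  have hcauchy := norm_deriv_le_of_forall_mem_sphere_norm_le hρ0
    (hgdiff.mono ((closure_ball s hρ0.ne').trans_subset hmem)).diffContOnCl hcircle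
  rw [(hg s hs).deriv] at hcauchy
  convert hcauchy using 1
  rw [hρ]
  field_simp
  norm_num

end LogDeriv

section LogDerivZeta

variable {s : ℂ}

lemma half_lt_re_of_mem_ball {c : ℂ} (hc : c.re = 2) (hs : s ∈ Metric.ball c (3 / 2)) :
    1 / 2 < s.re := by
  rw [Metric.mem_ball, dist_eq] at hs
  have hre := (abs_le.mp (abs_re_le_norm (s - c))).1
  rw [sub_re, hc] at hre
  linarith

lemma norm_riemannZeta₁_le_of_mem_ball {t : ℝ} (hs : s ∈ Metric.ball (2 + t * I) (3 / 2)) :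
    ‖riemannZeta₁ s‖ ≤ 75 * (1 + |t|) ^ 2 := by
  have hre : 1 / 2 < s.re := half_lt_re_of_mem_ball (by simp) hs
  rw [Metric.mem_ball, dist_eq] at hs
  have hcenter : ‖(2 + t * I : ℂ)‖ ≤ 2 + |t| := by
    simpa using norm_add_le (2 : ℂ) (t * I)
  have hnorm : 1 + ‖s‖ ≤ 5 * (1 + |t|) := by
    linarith [norm_le_norm_add_norm_sub' s (2 + t * I), abs_nonneg t]
  calc ‖riemannZeta₁ s‖ ≤ 3 * (1 + ‖s‖) ^ 2 := norm_riemannZeta₁_le hre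
    _ ≤ 3 * (5 * (1 + |t|)) ^ 2 := by gcongr
    _ = 75 * (1 + |t|) ^ 2 := by ring

lemma norm_logDeriv_riemannZeta₁_le (hRH : RiemannHypothesis) (hs : 1 / 2 < s.re)
    (hs2 : s.re ≤ 2) :
    ‖logDeriv riemannZeta₁ s‖ ≤
      12 * Real.log (150 * (1 + |s.im|) ^ 2) / (s.re - 1 / 2) ^ 2 := by
  set c : ℂ := 2 + s.im * I with hc
  have hcre : c.re = 2 := by simp [hc]
  have hsc : ‖s - c‖ = 2 - s.re := by
    have : s - c = ((s.re - 2 : ℝ) : ℂ) := by apply Complex.ext <;> simp [hc]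
    rw [this, norm_real, Real.norm_eq_abs, abs_of_nonpos (by linarith)]
    ring
  have hlarge : 1 < 150 * (1 + |s.im|) ^ 2 := by nlinarith [abs_nonneg s.im]
  have hbound : ∀ z ∈ Metric.ball c (3 / 2), ‖riemannZeta₁ z‖ ≤
      Real.exp (Real.log (150 * (1 + |s.im|) ^ 2)) * ‖riemannZeta₁ c‖ := by
    intro z hz
    rw [Real.exp_log (by linarith)]
    nlinarith [norm_riemannZeta₁_le_of_mem_ball hz, half_le_norm_riemannZeta₁ hcre]
  have hmain := norm_logDeriv_le_of_norm_le_exp_mul (Real.log_pos hlarge)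
    differentiable_riemannZeta₁.differentiableOn
    (fun z hz => riemannZeta₁_ne_zero_of_half_lt_re hRH (half_lt_re_of_mem_ball hcre hz)) hbound
    (s := s) (by rw [Metric.mem_ball, dist_eq, hsc]; linarith)
  rw [hsc] at hmain
  convert hmain using 2 <;> ring

lemma exists_norm_logDeriv_riemannZeta₁_le_rpow (hRH : RiemannHypothesis) {σ ε : ℝ}
    (hσ : 1 / 2 < σ) (hε : 0 < ε) :
    ∃ K : ℝ, 0 ≤ K ∧ ∀ s : ℂ, σ ≤ s.re → s.re ≤ 2 →
      ‖logDeriv riemannZeta₁ s‖ ≤ K * (1 + |s.im|) ^ ε := by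
  refine ⟨12 * (150 ^ (ε / 2) / (ε / 2)) / (σ - 1 / 2) ^ 2, by positivity, fun s hs hs2 => ?_⟩
  have hlog : Real.log (150 * (1 + |s.im|) ^ 2) ≤ 150 ^ (ε / 2) / (ε / 2) * (1 + |s.im|) ^ ε := by
    refine (Real.log_le_rpow_div (by positivity) (half_pos hε)).trans_eq ?_
    rw [Real.mul_rpow (by norm_num) (by positivity), ← Real.rpow_natCast_mul (by positivity),
      Nat.cast_ofNat, mul_div_cancel₀ _ two_ne_zero]
    ring
  calc ‖logDeriv riemannZeta₁ s‖
      ≤ 12 * Real.log (150 * (1 + |s.im|) ^ 2) / (s.re - 1 / 2) ^ 2 :=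
        norm_logDeriv_riemannZeta₁_le hRH (hσ.trans_le hs) hs2
    _ ≤ 12 * (150 ^ (ε / 2) / (ε / 2) * (1 + |s.im|) ^ ε) / (σ - 1 / 2) ^ 2 := by gcongr
    _ = _ := by ring

end LogDerivZeta

/-! ### The prime number theorem with an `x ^ α` error term, for every `α > 1 / 2` -/

/-- The error term `ψ(u) - u`, shifted by `1` so that its transform is `-(ζ₁'/ζ₁)(s) / s`, which has
no pole at `s = 1`. -/
noncomputable def psiError (u : ℝ) : ℝ := Chebyshev.psi u - u + 1

/-- The primitive of `psiError`: a first Cesàro mean, whose transform decays fast enough on vertical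
lines for Mellin inversion to converge absolutely. -/
noncomputable def psiErrorPrimitive (u : ℝ) : ℝ := ∫ v in (1 : ℝ)..u, psiError v

/-- The transform of `psiErrorPrimitive` at `s + 1`. -/
noncomputable def zetaKernel (s : ℂ) : ℂ := -logDeriv riemannZeta₁ s / (s * (s + 1))

lemma measurable_ofReal_psi : Measurable fun u : ℝ => (Chebyshev.psi u : ℂ) :=
  Complex.measurable_ofReal.comp Chebyshev.psi_mono.measurable

lemma measurable_ofReal_psiError : Measurable fun u : ℝ => (psiError u : ℂ) :=
  Complex.measurable_ofReal.comp
    ((Chebyshev.psi_mono.measurable.sub measurable_id).add_const 1)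

lemma intervalIntegrable_psiError (a b : ℝ) : IntervalIntegrable psiError volume a b :=
  (Chebyshev.psi_mono.intervalIntegrable.sub (continuous_id.intervalIntegrable a b)).add
    (continuous_const.intervalIntegrable a b)

lemma continuous_psiErrorPrimitive : Continuous psiErrorPrimitive :=
  intervalIntegral.continuous_primitive intervalIntegrable_psiError 1

lemma psi_le_six_mul {x : ℝ} (hx : 0 ≤ x) : Chebyshev.psi x ≤ 6 * x := by
  have hlog : Real.log 4 ≤ 2 := by
    rw [show (4 : ℝ) = 2 ^ 2 by norm_num, Real.log_pow, Nat.cast_ofNat]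
    linarith [Real.log_two_lt_d9]
  exact (Chebyshev.psi_le_const_mul_self hx).trans (by gcongr; linarith)

lemma abs_psiError_le {u : ℝ} (hu : 1 ≤ u) : |psiError u| ≤ 6 * u := by
  have := psi_le_six_mul (zero_le_one.trans hu)
  have := Chebyshev.psi_nonneg u
  rw [psiError, abs_le]
  constructor <;> linarith

lemma norm_ofReal_psiError_le (u : ℝ) (hu : 1 < u) : ‖(psiError u : ℂ)‖ ≤ 6 * u ^ (1 : ℝ) := by
  simpa using abs_psiError_le hu.le

lemma norm_ofReal_psi_le (u : ℝ) (hu : 1 < u) : ‖(Chebyshev.psi u : ℂ)‖ ≤ 6 * u ^ (1 : ℝ) := by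
  simpa [abs_of_nonneg (Chebyshev.psi_nonneg u)] using psi_le_six_mul (zero_lt_one.trans hu).le

lemma norm_ofReal_psiErrorPrimitive_le (u : ℝ) (hu : 1 < u) :
    ‖(psiErrorPrimitive u : ℂ)‖ ≤ 6 * u ^ (2 : ℝ) := by
  have hint : ‖psiErrorPrimitive u‖ ≤ 6 * u * |u - 1| := by
    refine intervalIntegral.norm_integral_le_of_norm_le_const fun v hv => ?_
    rw [uIoc_of_le hu.le] at hv
    exact (abs_psiError_le hv.1.le).trans (by linarith [hv.2])
  rw [abs_of_pos (by linarith : 0 < u - 1)] at hint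
  rw [norm_real, Real.rpow_two]
  nlinarith

section PsiTransform

variable {s : ℂ}

lemma mul_tailMellin_psi (hs : 1 < s.re) :
    s * tailMellin (fun u => (Chebyshev.psi u : ℂ)) s = 1 / (s - 1) - logDeriv riemannZeta₁ s := by
  have hs1 : s ≠ 1 := ne_of_re_lt_re hs
  have hpsi : ∀ n : ℕ, ∑ k ∈ Finset.Icc 1 n, ArithmeticFunction.vonMangoldt k =
      Chebyshev.psi n := fun n => by rw [Chebyshev.psi, Nat.floor_natCast]; rfl
  have hL := LSeries_eq_mul_integral_of_nonneg (fun n => ArithmeticFunction.vonMangoldt n) (r := 1)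
    zero_le_one hs (by
      simp_rw [hpsi]
      refine Asymptotics.IsBigO.of_bound 6 (Eventually.of_forall fun n => ?_)
      rw [Real.norm_of_nonneg (Chebyshev.psi_nonneg _), Real.rpow_one,
        Real.norm_of_nonneg (by positivity)]
      exact psi_le_six_mul (by positivity)) fun _ => ArithmeticFunction.vonMangoldt_nonneg
  have hsummatory : ∀ u : ℝ, (∑ k ∈ Finset.Icc 1 ⌊u⌋₊, (ArithmeticFunction.vonMangoldt k : ℂ)) =
      Chebyshev.psi u := fun u => by
    rw [← ofReal_sum, hpsi, ← Chebyshev.psi_eq_psi_coe_floor]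
  simp only [hsummatory] at hL
  have hne : riemannZeta₁ s ≠ 0 := fun h =>
    riemannZeta_ne_zero_of_one_lt_re hs (by rw [riemannZeta_eq_inv_sub_mul hs1, h, mul_zero])
  rw [ArithmeticFunction.LSeries_vonMangoldt_eq_deriv_riemannZeta_div hs,
    riemannZeta_eq_inv_sub_mul hs1, deriv_riemannZeta_eq_neg_inv_sub_sq_mul_add hs1] at hL
  rw [tailMellin, ← hL, logDeriv_apply]
  field_simp [sub_ne_zero.mpr hs1]
  ring

lemma tailMellin_psiError (hs : 1 < s.re) :
    tailMellin (fun u => (psiError u : ℂ)) s = -logDeriv riemannZeta₁ s / s := by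
  have hs0 : s ≠ 0 := ne_of_re_lt_re (by simp; linarith)
  have hs1 : s - 1 ≠ 0 := sub_ne_zero.mpr (ne_of_re_lt_re hs)
  have hid := integrableOn_cpow_mul_cpow (s := s) (w := 1) (by simpa)
  have hone := integrableOn_cpow_mul_cpow (s := s) (w := 0) (by simp; linarith)
  have hpsi := integrableOn_Ioi_mul_cpow (w := -(s + 1)) measurable_ofReal_psi norm_ofReal_psi_le
    (by simp; linarith)
  have hsplit : (fun u : ℝ => (psiError u : ℂ)) =
      fun u : ℝ => (Chebyshev.psi u : ℂ) - ((u : ℂ) ^ (1 : ℂ) - (u : ℂ) ^ (0 : ℂ)) := by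
    ext u
    simp only [psiError, cpow_one, cpow_zero]
    push_cast
    ring
  rw [hsplit, tailMellin_sub hpsi (by simp only [sub_mul]; exact hid.sub hone),
    tailMellin_sub hid hone, tailMellin_cpow (by simpa), tailMellin_cpow (by simp; linarith),
    eq_div_iff hs0, mul_comm, mul_sub, mul_tailMellin_psi hs]
  field_simp
  ring

lemma tailMellin_psiErrorPrimitive (hs : 1 < s.re) :
    tailMellin (fun u => (psiErrorPrimitive u : ℂ)) (s + 1) = zetaKernel s := by
  have hint := integrableOn_Ioi_mul_cpow (w := -(s + 1)) measurable_ofReal_psiError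
    norm_ofReal_psiError_le (by simp; linarith)
  have hprimitive : (fun u => (psiErrorPrimitive u : ℂ)) =
      fun u => ∫ v in (1 : ℝ)..u, (psiError v : ℂ) := by
    ext u
    exact intervalIntegral.integral_ofReal.symm
  rw [hprimitive, tailMellin_primitive measurable_ofReal_psiError (by simp; linarith) hint,
    add_sub_cancel_right, tailMellin_psiError hs, div_div, zetaKernel]

end PsiTransform

section ZetaKernel

lemma differentiableOn_zetaKernel (hRH : RiemannHypothesis) :
    DifferentiableOn ℂ zetaKernel {s | 1 / 2 < s.re} := by
  intro s (hs : 1 / 2 < s.re)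
  have hs0 : s ≠ 0 := ne_of_re_lt_re (by simp; linarith)
  have hs1 : s + 1 ≠ 0 := ne_of_re_lt_re (by simp; linarith)
  refine DifferentiableAt.differentiableWithinAt ?_
  exact ((differentiable_riemannZeta₁.deriv s).div (differentiable_riemannZeta₁ s)
    (riemannZeta₁_ne_zero_of_half_lt_re hRH hs)).neg.div (by fun_prop) (mul_ne_zero hs0 hs1)

lemma one_add_abs_im_le_three_mul_norm {s : ℂ} (hs : 1 / 2 ≤ s.re) : 1 + |s.im| ≤ 3 * ‖s‖ := by
  linarith [abs_im_le_norm s, (le_abs_self s.re).trans (abs_re_le_norm s)]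

lemma exists_norm_zetaKernel_le_rpow (hRH : RiemannHypothesis) {σ ε : ℝ} (hσ : 1 / 2 < σ)
    (hε : 0 < ε) :
    ∃ K : ℝ, 0 ≤ K ∧ ∀ s : ℂ, σ ≤ s.re → s.re ≤ 2 →
      ‖zetaKernel s‖ ≤ K * (1 + |s.im|) ^ (-(2 - ε)) := by
  obtain ⟨K, hK, hlog⟩ := exists_norm_logDeriv_riemannZeta₁_le_rpow hRH hσ hε
  refine ⟨9 * K, by positivity, fun s hs hs2 => ?_⟩
  have hpos : 0 < 1 + |s.im| := by positivity
  have hnorm : (1 + |s.im|) / 3 ≤ ‖s‖ := by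
    linarith [one_add_abs_im_le_three_mul_norm (hσ.le.trans hs)]
  have hnorm' : (1 + |s.im|) / 3 ≤ ‖s + 1‖ := by
    have := one_add_abs_im_le_three_mul_norm (s := s + 1) (by simp; linarith)
    simp only [add_im, one_im, add_zero] at this
    linarith
  calc ‖zetaKernel s‖ = ‖logDeriv riemannZeta₁ s‖ / (‖s‖ * ‖s + 1‖) := by
        rw [zetaKernel, norm_div, norm_mul, norm_neg]
    _ ≤ K * (1 + |s.im|) ^ ε / ((1 + |s.im|) / 3 * ((1 + |s.im|) / 3)) := by
        gcongr
        exact hlog s hs hs2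
    _ = 9 * K * ((1 + |s.im|) ^ ε / (1 + |s.im|) ^ (2 : ℝ)) := by
        rw [Real.rpow_two]
        field_simp
        norm_num
    _ = 9 * K * (1 + |s.im|) ^ (-(2 - ε)) := by
        rw [← Real.rpow_sub hpos, neg_sub]

lemma integrable_zetaKernel_vertical (hRH : RiemannHypothesis) {σ : ℝ} (hσ : 1 / 2 < σ)
    (hσ2 : σ ≤ 2) : Integrable fun y : ℝ => zetaKernel (σ + y * I) := by
  obtain ⟨K, -, hK⟩ := exists_norm_zetaKernel_le_rpow hRH hσ one_half_pos
  refine integrable_vertical_of_norm_le ((differentiableOn_zetaKernel hRH).continuousOn.mono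
    fun s (hs : s.re = σ) => show 1 / 2 < s.re from hs ▸ hσ) (by norm_num) fun s hs =>
    hK s hs.ge (hs.trans_le hσ2)

lemma psiErrorPrimitive_eq_integral_two (hRH : RiemannHypothesis) {x : ℝ} (hx : 1 < x) :
    (psiErrorPrimitive x : ℂ) = (1 / (2 * Real.pi)) •
      ∫ y : ℝ, (x : ℂ) ^ (((2 : ℝ) + y * I : ℂ) + 1) * zetaKernel ((2 : ℝ) + y * I) := by
  have hshift : ∀ y : ℝ, ((3 : ℝ) + y * I : ℂ) = ((2 : ℝ) + y * I) + 1 := fun y => by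
    push_cast
    ring
  have htransform : ∀ y : ℝ, tailMellin (fun u => (psiErrorPrimitive u : ℂ)) ((3 : ℝ) + y * I) =
      zetaKernel ((2 : ℝ) + y * I) := fun y => by
    rw [hshift, tailMellin_psiErrorPrimitive (by simp)]
  have hinv := eq_integral_vertical_tailMellin (f := fun u => (psiErrorPrimitive u : ℂ)) (σ := 3) hx
    (integrableOn_Ioi_mul_cpow (Complex.measurable_ofReal.comp
      continuous_psiErrorPrimitive.measurable) norm_ofReal_psiErrorPrimitive_le
      (by norm_num))
    (by simpa only [htransform] using integrable_zetaKernel_vertical hRH (by norm_num) le_rfl)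
    (Complex.continuous_ofReal.comp continuous_psiErrorPrimitive).continuousAt
  simp only [htransform] at hinv
  simpa only [hshift] using hinv

lemma psiErrorPrimitive_eq_integral (hRH : RiemannHypothesis) {σ x : ℝ} (hσ : 1 / 2 < σ)
    (hσ2 : σ ≤ 2) (hx : 1 < x) :
    (psiErrorPrimitive x : ℂ) = (1 / (2 * Real.pi)) •
      ∫ y : ℝ, (x : ℂ) ^ ((σ + y * I : ℂ) + 1) * zetaKernel (σ + y * I) := by
  obtain ⟨K, -, hbound⟩ := exists_norm_zetaKernel_le_rpow hRH hσ one_half_pos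
  have hx0 : 0 < x := zero_lt_one.trans hx
  rw [psiErrorPrimitive_eq_integral_two hRH hx]
  congr 1
  refine integral_vertical_eq_of_norm_le (f := fun s => (x : ℂ) ^ (s + 1) * zetaKernel s)
    (B := x ^ (3 : ℝ) * K) (β := 2 - 1 / 2) hσ2 ?_ (by norm_num) fun s hs => ?_
  · refine DifferentiableOn.mul (fun s _ => ?_) ((differentiableOn_zetaKernel hRH).mono
      fun s hs => hσ.trans_le hs.1)
    exact (DifferentiableAt.const_cpow (by fun_prop)
      (Or.inl (ofReal_ne_zero.mpr hx0.ne'))).differentiableWithinAt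
  · rw [norm_mul, norm_cpow_eq_rpow_re_of_pos hx0, mul_assoc]
    gcongr
    · exact hx.le
    · simp only [add_re, one_re]
      linarith [hs.2]
    · exact hbound s hs.1 hs.2

end ZetaKernel

section CpowIncrement

variable {a b θ : ℝ} {w : ℂ}

lemma norm_cpow_sub_cpow_le_mul (ha : 0 < a) (hab : a ≤ b) (hw : 1 ≤ w.re) :
    ‖(b : ℂ) ^ w - (a : ℂ) ^ w‖ ≤ ‖w‖ * b ^ (w.re - 1) * (b - a) := by
  have hw0 : w ≠ 0 := ne_of_re_lt_re (by simp; linarith)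
  have hderiv : ∀ u ∈ Icc a b,
      HasDerivWithinAt (fun u : ℝ => (u : ℂ) ^ w) (w * (u : ℂ) ^ (w - 1)) (Icc a b) u :=
    fun u hu => (hasDerivAt_ofReal_cpow_const (ha.trans_le hu.1).ne' hw0).hasDerivWithinAt
  have hbound : ∀ u ∈ Icc a b, ‖w * (u : ℂ) ^ (w - 1)‖ ≤ ‖w‖ * b ^ (w.re - 1) := fun u hu => by
    have hu0 : 0 < u := ha.trans_le hu.1
    rw [norm_mul, norm_cpow_eq_rpow_re_of_pos hu0, sub_re, one_re]
    gcongr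
    exact hu.2
  simpa [abs_of_nonneg (sub_nonneg.mpr hab)] using
    (convex_Icc a b).norm_image_sub_le_of_norm_hasDerivWithin_le hderiv hbound
      (left_mem_Icc.mpr hab) (right_mem_Icc.mpr hab)

lemma norm_cpow_sub_cpow_le_two_mul (ha : 0 < a) (hab : a ≤ b) (hw : 0 ≤ w.re) :
    ‖(b : ℂ) ^ w - (a : ℂ) ^ w‖ ≤ 2 * b ^ w.re := by
  calc ‖(b : ℂ) ^ w - (a : ℂ) ^ w‖ ≤ b ^ w.re + a ^ w.re := by
        rw [← norm_cpow_eq_rpow_re_of_pos ha, ← norm_cpow_eq_rpow_re_of_pos (ha.trans_le hab)]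
        exact norm_sub_le _ _
    _ ≤ b ^ w.re + b ^ w.re := by gcongr
    _ = 2 * b ^ w.re := (two_mul _).symm

lemma norm_cpow_sub_cpow_le_rpow (ha : 0 < a) (hab : a ≤ b) (hw : 1 ≤ w.re) (hθ : 0 ≤ θ)
    (hθ1 : θ ≤ 1) :
    ‖(b : ℂ) ^ w - (a : ℂ) ^ w‖ ≤ 2 * ‖w‖ ^ θ * (b - a) ^ θ * b ^ (w.re - θ) := by
  have hb : 0 < b := ha.trans_le hab
  have hba : 0 ≤ b - a := sub_nonneg.mpr hab
  have hθ' : 0 ≤ 1 - θ := sub_nonneg.mpr hθ1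
  set D := ‖(b : ℂ) ^ w - (a : ℂ) ^ w‖
  have htwo : (2 : ℝ) ^ (1 - θ) ≤ 2 :=
    Real.rpow_le_self_of_one_le one_le_two (by linarith)
  calc D = D ^ θ * D ^ (1 - θ) := by
        rw [← Real.rpow_add_of_nonneg (norm_nonneg _) hθ hθ', add_sub_cancel, Real.rpow_one]
    _ ≤ (‖w‖ * b ^ (w.re - 1) * (b - a)) ^ θ * (2 * b ^ w.re) ^ (1 - θ) := by
        gcongr
        · exact norm_cpow_sub_cpow_le_mul ha hab hw
        · exact norm_cpow_sub_cpow_le_two_mul ha hab (zero_le_one.trans hw)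
    _ = 2 ^ (1 - θ) * ‖w‖ ^ θ * (b - a) ^ θ * b ^ (w.re - θ) := by
        rw [Real.mul_rpow (by positivity) hba, Real.mul_rpow (by positivity) (by positivity),
          Real.mul_rpow two_pos.le (by positivity), ← Real.rpow_mul hb.le, ← Real.rpow_mul hb.le,
          show w.re - θ = (w.re - 1) * θ + w.re * (1 - θ) by ring, Real.rpow_add hb]
        ring
    _ ≤ 2 * ‖w‖ ^ θ * (b - a) ^ θ * b ^ (w.re - θ) := by gcongr

end CpowIncrement

section Increment

variable {σ θ : ℝ}

lemma integrable_cpow_mul_zetaKernel_vertical (hRH : RiemannHypothesis) {x : ℝ} (hx : 0 < x)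
    (hσ : 1 / 2 < σ) (hσ2 : σ ≤ 2) :
    Integrable fun y : ℝ => (x : ℂ) ^ ((σ + y * I : ℂ) + 1) * zetaKernel (σ + y * I) := by
  refine (integrable_zetaKernel_vertical hRH hσ hσ2).bdd_mul (c := x ^ (σ + 1)) ?_ ?_
  · exact (Continuous.const_cpow (by fun_prop)
      (Or.inl (ofReal_ne_zero.mpr hx.ne'))).aestronglyMeasurable
  · refine Eventually.of_forall fun y => ?_
    rw [norm_cpow_eq_rpow_re_of_pos hx]
    simp

lemma psiErrorPrimitive_sub_eq_integral (hRH : RiemannHypothesis) {a b : ℝ} (ha : 1 < a)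
    (hb : 1 < b) (hσ : 1 / 2 < σ) (hσ2 : σ ≤ 2) :
    ((psiErrorPrimitive b - psiErrorPrimitive a : ℝ) : ℂ) = (1 / (2 * Real.pi)) •
      ∫ y : ℝ, ((b : ℂ) ^ ((σ + y * I : ℂ) + 1) - (a : ℂ) ^ ((σ + y * I : ℂ) + 1)) *
        zetaKernel (σ + y * I) := by
  have hint {x : ℝ} (hx : 1 < x) :=
    integrable_cpow_mul_zetaKernel_vertical hRH (zero_lt_one.trans hx) hσ hσ2
  simp only [sub_mul]
  rw [integral_sub (hint hb) (hint ha), smul_sub, ofReal_sub,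
    psiErrorPrimitive_eq_integral hRH hσ hσ2 ha, psiErrorPrimitive_eq_integral hRH hσ hσ2 hb]

lemma norm_vertical_add_one_le (hσ : 0 ≤ σ) (hσ2 : σ ≤ 2) (y : ℝ) :
    ‖(σ + y * I : ℂ) + 1‖ ≤ 3 * (1 + |y|) := by
  calc ‖(σ + y * I : ℂ) + 1‖ ≤ ‖(σ : ℂ)‖ + ‖(y * I : ℂ)‖ + ‖(1 : ℂ)‖ :=
        norm_add₃_le
    _ = σ + |y| + 1 := by simp [abs_of_nonneg hσ]
    _ ≤ 3 * (1 + |y|) := by linarith [abs_nonneg y]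

lemma exists_norm_cpow_sub_mul_zetaKernel_le (hRH : RiemannHypothesis) (hσ : 1 / 2 < σ)
    (hσ2 : σ ≤ 2) (hθ : 0 ≤ θ) (hθ1 : θ < 1) :
    ∃ K : ℝ, 0 ≤ K ∧ ∀ a b y : ℝ, 0 < a → a ≤ b →
      ‖((b : ℂ) ^ ((σ + y * I : ℂ) + 1) - (a : ℂ) ^ ((σ + y * I : ℂ) + 1)) *
        zetaKernel (σ + y * I)‖ ≤
      K * (b - a) ^ θ * b ^ (σ + 1 - θ) * (1 + ‖y‖) ^ (-(3 - θ) / 2) := by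
  obtain ⟨K, hK, hkernel⟩ :=
    exists_norm_zetaKernel_le_rpow hRH hσ (half_pos (sub_pos.mpr hθ1))
  refine ⟨6 * K, by positivity, fun a b y ha hab => ?_⟩
  have hb : 0 < b := ha.trans_le hab
  have hy : 0 < 1 + |y| := by positivity
  have hcpow := norm_cpow_sub_cpow_le_rpow (w := (σ + y * I : ℂ) + 1) ha hab
    (by simp; linarith) hθ hθ1.le
  have hzeta := hkernel (σ + y * I) (by simp) (by simpa using hσ2)
  simp only [add_re, add_im, ofReal_re, ofReal_im, mul_re, mul_im, I_re, I_im, one_re, mul_zero,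
    mul_one, zero_add, add_zero, sub_zero] at hcpow hzeta
  have hthree : (3 : ℝ) ^ θ ≤ 3 := Real.rpow_le_self_of_one_le (by norm_num) hθ1.le
  have hbase : ‖(σ + y * I : ℂ) + 1‖ ^ θ ≤ 3 * (1 + |y|) ^ θ :=
    calc ‖(σ + y * I : ℂ) + 1‖ ^ θ ≤ (3 * (1 + |y|)) ^ θ := by
          gcongr
          exact norm_vertical_add_one_le (by linarith) hσ2 y
      _ = 3 ^ θ * (1 + |y|) ^ θ := Real.mul_rpow (by norm_num) hy.le
      _ ≤ 3 * (1 + |y|) ^ θ := by gcongr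
  rw [norm_mul, Real.norm_eq_abs]
  calc _ ≤ (2 * (3 * (1 + |y|) ^ θ) * (b - a) ^ θ * b ^ (σ + 1 - θ)) *
        (K * (1 + |y|) ^ (-(2 - (1 - θ) / 2))) := by
        refine mul_le_mul (hcpow.trans ?_) hzeta (norm_nonneg _) (by positivity)
        gcongr
    _ = 6 * K * (b - a) ^ θ * b ^ (σ + 1 - θ) * (1 + |y|) ^ (-(3 - θ) / 2) := by
        rw [show -(3 - θ) / 2 = θ + -(2 - (1 - θ) / 2) by ring, Real.rpow_add hy]
        ring

lemma exists_abs_psiErrorPrimitive_sub_le (hRH : RiemannHypothesis) (hσ : 1 / 2 < σ)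
    (hσ2 : σ ≤ 2) (hθ : 0 ≤ θ) (hθ1 : θ < 1) :
    ∃ K : ℝ, 0 ≤ K ∧ ∀ a b : ℝ, 1 < a → a ≤ b →
      |psiErrorPrimitive b - psiErrorPrimitive a| ≤ K * (b - a) ^ θ * b ^ (σ + 1 - θ) := by
  obtain ⟨K, hK, hbound⟩ := exists_norm_cpow_sub_mul_zetaKernel_le hRH hσ hσ2 hθ hθ1
  have hint : Integrable fun y : ℝ => (1 + ‖y‖) ^ (-((3 - θ) / 2)) :=
    integrable_one_add_norm (by simp; linarith)
  simp only [neg_div] at hbound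
  set Y := ∫ y : ℝ, (1 + ‖y‖) ^ (-((3 - θ) / 2)) with hY
  refine ⟨1 / (2 * Real.pi) * (K * Y), by positivity, fun a b ha hab => ?_⟩
  rw [← Real.norm_eq_abs, ← norm_real,
    psiErrorPrimitive_sub_eq_integral hRH ha (ha.trans_le hab) hσ hσ2, norm_smul,
    Real.norm_of_nonneg (by positivity), mul_assoc, mul_assoc]
  gcongr
  refine (norm_integral_le_of_norm_le (hint.const_mul _) (Eventually.of_forall fun y =>
    hbound a b y (zero_lt_one.trans ha) hab)).trans_eq ?_
  rw [integral_const_mul, ← hY]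
  ring

end Increment

section Tauberian

lemma psiErrorPrimitive_sub_mem_Icc {a b : ℝ} (hab : a ≤ b) :
    psiErrorPrimitive b - psiErrorPrimitive a ∈
      Icc ((b - a) * (Chebyshev.psi a - b + 1)) ((b - a) * (Chebyshev.psi b - a + 1)) := by
  rw [show psiErrorPrimitive b - psiErrorPrimitive a = ∫ v in a..b, psiError v from
    intervalIntegral.integral_interval_sub_left (intervalIntegrable_psiError _ _)
      (intervalIntegrable_psiError _ _), ← smul_eq_mul, ← smul_eq_mul,
    ← intervalIntegral.integral_const, ← intervalIntegral.integral_const]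
  constructor
  · refine intervalIntegral.integral_mono_on hab (by simp) (intervalIntegrable_psiError a b)
      fun v hv => ?_
    rw [psiError]
    linarith [Chebyshev.psi_mono hv.1, hv.2]
  · refine intervalIntegral.integral_mono_on hab (intervalIntegrable_psiError a b) (by simp)
      fun v hv => ?_
    rw [psiError]
    linarith [Chebyshev.psi_mono hv.2, hv.1]

lemma abs_psi_sub_le_of_abs_psiErrorPrimitive_sub_le {x h e : ℝ} (hh : 0 < h)
    (hright : |psiErrorPrimitive (x + h) - psiErrorPrimitive x| ≤ h * e)
    (hleft : |psiErrorPrimitive x - psiErrorPrimitive (x - h)| ≤ h * e) :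
    |Chebyshev.psi x - x| ≤ e + h + 1 := by
  have hupper := (psiErrorPrimitive_sub_mem_Icc (show x ≤ x + h by linarith)).1
  have hlower := (psiErrorPrimitive_sub_mem_Icc (show x - h ≤ x by linarith)).2
  rw [add_sub_cancel_left] at hupper
  rw [sub_sub_cancel] at hlower
  have hle : Chebyshev.psi x - (x + h) + 1 ≤ e :=
    le_of_mul_le_mul_left (hupper.trans (le_of_abs_le hright)) hh
  have hge : -e ≤ Chebyshev.psi x - (x - h) + 1 :=
    le_of_mul_le_mul_left (by linarith [neg_le_of_abs_le hleft]) hh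
  rw [abs_le]
  constructor <;> linarith

variable {α : ℝ}

lemma abs_psi_sub_le_of_le_two {x : ℝ} (hx : 0 ≤ x) (hx2 : x ≤ 2) (hα : 0 ≤ α) (hα1 : α ≤ 1) :
    |Chebyshev.psi x - x| ≤ 12 * x ^ α := by
  have htwo : x ^ (1 - α) ≤ 2 :=
    calc x ^ (1 - α) ≤ 2 ^ (1 - α) := Real.rpow_le_rpow hx hx2 (by linarith)
      _ ≤ 2 := Real.rpow_le_self_of_one_le one_le_two (by linarith)
  have hsplit : x = x ^ α * x ^ (1 - α) := by
    rw [← Real.rpow_add_of_nonneg hx hα (by linarith), add_sub_cancel, Real.rpow_one]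
  have hxα : x ≤ 2 * x ^ α := by
    nlinarith [Real.rpow_nonneg hx α]
  have := psi_le_six_mul hx
  have := Chebyshev.psi_nonneg x
  rw [abs_le]
  constructor <;> linarith

-- The means of `psiError` over `[x - h, x]` and `[x, x + h]` are compared with its value at `x`
-- for `h` of the size `x ^ α` of the error sought.
lemma exists_abs_psi_sub_le_rpow (hRH : RiemannHypothesis) (hα : 1 / 2 < α) (hα1 : α < 1) :
    ∃ K : ℝ, 0 ≤ K ∧ ∀ x : ℝ, 0 ≤ x → |Chebyshev.psi x - x| ≤ K * x ^ α := by
  obtain ⟨θ, hθ, hθ1⟩ : ∃ θ : ℝ, 3 / 2 - α < θ ∧ θ < 1 := exists_between (by linarith)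
  obtain ⟨K, hK, hincr⟩ := exists_abs_psiErrorPrimitive_sub_le (σ := α + θ - 1) (θ := θ) hRH
    (by linarith) (by linarith) (by linarith) hθ1
  refine ⟨4 * K + 14, by positivity, fun x hx => ?_⟩
  rcases le_or_gt x 2 with hx2 | hx2
  · exact (abs_psi_sub_le_of_le_two hx hx2 (by linarith) hα1.le).trans (by gcongr; linarith)
  have hpow : 1 ≤ x ^ α := Real.one_le_rpow (by linarith) (by linarith)
  have hpow_le : x ^ α ≤ x := Real.rpow_le_self_of_one_le (by linarith) hα1.le
  obtain ⟨h, hh⟩ : ∃ h, h = x ^ α / 2 := ⟨_, rfl⟩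
  have hh0 : 0 < h := by linarith
  have hhθ : h ^ θ ≤ 2 * h :=
    calc h ^ θ ≤ (2 * h) ^ θ := by gcongr <;> linarith
      _ ≤ 2 * h := Real.rpow_le_self_of_one_le (by linarith) hθ1.le
  have hwindow : ∀ a b, 1 < a → b - a = h → b ≤ 2 * x →
      |psiErrorPrimitive b - psiErrorPrimitive a| ≤ h * (4 * K * x ^ α) := fun a b ha hab hb => by
    have hb0 : 0 < b := by linarith
    have hbα : b ^ α ≤ 2 * x ^ α :=
      calc b ^ α ≤ (2 * x) ^ α := by gcongr
        _ = 2 ^ α * x ^ α := Real.mul_rpow two_pos.le hx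
        _ ≤ 2 * x ^ α := by gcongr; exact Real.rpow_le_self_of_one_le one_le_two hα1.le
    calc _ ≤ K * h ^ θ * b ^ α := by
          have := hincr a b ha (by linarith)
          rwa [hab, sub_add_cancel, add_sub_cancel_right] at this
      _ ≤ K * (2 * h) * (2 * x ^ α) := by gcongr
      _ = h * (4 * K * x ^ α) := by ring
  have := abs_psi_sub_le_of_abs_psiErrorPrimitive_sub_le (x := x) hh0
    (hwindow x (x + h) (by linarith) (by ring) (by linarith))
    (hwindow (x - h) x (by linarith) (by ring) (by linarith))
  linarith

lemma exists_abs_theta_sub_le_rpow (hRH : RiemannHypothesis) (hα : 1 / 2 < α) (hα1 : α < 1) :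
    ∃ K : ℝ, 0 ≤ K ∧ ∀ x : ℝ, 0 ≤ x → |Chebyshev.theta x - x| ≤ K * x ^ α := by
  obtain ⟨K, hK, hpsi⟩ := exists_abs_psi_sub_le_rpow hRH hα hα1
  obtain ⟨C, hC⟩ := Chebyshev.psi_sub_theta_le_mul_sqrt
  refine ⟨K + |C|, by positivity, fun x hx => ?_⟩
  have hdiff : |Chebyshev.theta x - Chebyshev.psi x| ≤ |C| * x ^ α := by
    rcases lt_or_ge x 2 with hx2 | hx2
    · rw [Chebyshev.theta_eq_zero_of_lt_two hx2, Chebyshev.psi_eq_zero_of_lt_two hx2, sub_self,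
        abs_zero]
      positivity
    · rw [abs_sub_comm, abs_of_nonneg (sub_nonneg.mpr (Chebyshev.theta_le_psi x))]
      refine (hC x).trans ?_
      rw [Real.sqrt_eq_rpow]
      gcongr
      · exact le_abs_self C
      · linarith
  calc |Chebyshev.theta x - x| ≤
        |Chebyshev.theta x - Chebyshev.psi x| + |Chebyshev.psi x - x| := abs_sub_le _ _ _
    _ ≤ |C| * x ^ α + K * x ^ α := add_le_add hdiff (hpsi x hx)
    _ = (K + |C|) * x ^ α := by ring

end Tauberian

/-! ### Weighted prime sums over sets close to an interval -/

/-- The sum of `log q` over the primes `q ≤ N` that lie in the set `S` of reals. -/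
noncomputable def primeLogSum (N : ℕ) (S : Set ℝ) : ℝ :=
  ∑ q ∈ Nat.primesLE N, S.indicator Real.log q

section PrimeLogSum

variable {N : ℕ} {S S' : Set ℝ} {a b : ℝ}

lemma primeLogSum_mono (h : S ⊆ S') : primeLogSum N S ≤ primeLogSum N S' :=
  Finset.sum_le_sum fun q _ =>
    indicator_le_indicator_apply_of_subset h (Real.log_natCast_nonneg q)

lemma primeLogSum_nonneg (N : ℕ) (S : Set ℝ) : 0 ≤ primeLogSum N S :=
  Finset.sum_nonneg fun q _ => indicator_apply_nonneg fun _ => Real.log_natCast_nonneg q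

lemma primeLogSum_empty (N : ℕ) : primeLogSum N ∅ = 0 := by
  simp only [primeLogSum, indicator_empty, Finset.sum_const_zero]

lemma primeLogSum_sdiff (h : S ⊆ S') :
    primeLogSum N (S' \ S) = primeLogSum N S' - primeLogSum N S := by
  simp only [primeLogSum, indicator_sdiff h, Pi.sub_apply, Finset.sum_sub_distrib]

lemma primeLogSum_Iic (ha : 0 ≤ a) (haN : ⌊a⌋₊ ≤ N) :
    primeLogSum N (Iic a) = Chebyshev.theta a := by
  classical
  simp only [primeLogSum, indicator_apply, ← Finset.sum_filter, Chebyshev.theta_eq_sum_primesLE]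
  congr 1
  ext q
  simp only [Finset.mem_filter, Nat.mem_primesLE, mem_Iic, Nat.le_floor_iff ha]
  exact ⟨fun ⟨⟨_, hq⟩, hqa⟩ => ⟨hqa, hq⟩,
    fun ⟨hqa, hq⟩ => ⟨⟨(Nat.le_floor hqa).trans haN, hq⟩, hqa⟩⟩

lemma primeLogSum_Ioc (ha : 0 ≤ a) (hab : a ≤ b) (hbN : ⌊b⌋₊ ≤ N) :
    primeLogSum N (Ioc a b) = Chebyshev.theta b - Chebyshev.theta a := by
  rw [← Iic_sdiff_Iic, primeLogSum_sdiff (Iic_subset_Iic.mpr hab),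
    primeLogSum_Iic (ha.trans hab) hbN, primeLogSum_Iic ha ((Nat.floor_mono hab).trans hbN)]

lemma volume_real_eq_of_Ioo_subset_of_subset_Ioc (hlower : Ioo a b ⊆ S) (hupper : S ⊆ Ioc a b) :
    volume.real S = max (b - a) 0 := by
  refine le_antisymm ?_ ?_
  · rw [← Real.volume_real_Ioc]
    exact measureReal_mono hupper measure_Ioc_lt_top.ne
  · rw [← Real.volume_real_Ioo]
    exact measureReal_mono hlower (ne_top_of_le_ne_top measure_Ioc_lt_top.ne (measure_mono hupper))

lemma abs_primeLogSum_sub_volume_le {E : ℝ} (ha : 0 ≤ a) (hbN : ⌊b⌋₊ ≤ N)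
    (hlower : Ioo a b ⊆ S) (hupper : S ⊆ Ioc a b) (hE : 0 ≤ E)
    (htheta : ∀ c ∈ Icc a b, |Chebyshev.theta c - c| ≤ E) :
    |primeLogSum N S - volume.real S| ≤ 2 * E := by
  rw [volume_real_eq_of_Ioo_subset_of_subset_Ioc hlower hupper]
  rcases le_or_gt b a with hba | hab
  · rw [subset_eq_empty hupper (Ioc_eq_empty_of_le hba), primeLogSum_empty,
      max_eq_right (sub_nonpos.mpr hba), sub_zero, abs_zero]
    positivity
  rw [max_eq_left (sub_nonneg.mpr hab.le)]
  have hθa := abs_le.mp (htheta a (left_mem_Icc.mpr hab.le))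
  have hle : primeLogSum N S ≤ b - a + 2 * E := by
    have hθb := abs_le.mp (htheta b (right_mem_Icc.mpr hab.le))
    have := primeLogSum_mono (N := N) hupper
    rw [primeLogSum_Ioc ha hab.le hbN] at this
    linarith
  have hge : b ≤ primeLogSum N S + a + 2 * E := by
    refine le_of_forall_lt_imp_le_of_dense fun c hcb => ?_
    rcases le_or_gt c a with hca | hac
    · linarith [primeLogSum_nonneg N S]
    · have hθc := abs_le.mp (htheta c ⟨hac.le, hcb.le⟩)
      have := primeLogSum_mono (N := N) ((Ioc_subset_Ioo_right hcb).trans hlower)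
      rw [primeLogSum_Ioc ha hac.le ((Nat.floor_mono hcb.le).trans hbN)] at this
      linarith
  rw [abs_le]
  constructor <;> linarith

end PrimeLogSum

/-! ### The region cut out by the de Weger inequalities -/

/-- The vertical slice at `t` of the region `t / r < u < r * t`, `t * u ≤ y`. -/
def coneSlice (r y t : ℝ) : Set ℝ := {u | t / r < u ∧ u < r * t ∧ t * u ≤ y}

/-- The vertical slice at `t` of the region whose prime points are counted by `NDM r x`. -/
def deWegerSlice (r x t : ℝ) : Set ℝ := coneSlice r x t \ coneSlice r (x / r) t

section Slices

variable {r x y t u : ℝ}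

lemma mem_deWegerSlice :
    u ∈ deWegerSlice r x t ↔ t / r < u ∧ u < r * t ∧ x / r < t * u ∧ t * u ≤ x := by
  simp only [deWegerSlice, coneSlice, Set.mem_sdiff, mem_ofPred_eq, not_and, not_le]
  tauto

lemma mem_deWegerSlice_comm (hr : 0 < r) : u ∈ deWegerSlice r x t ↔ t ∈ deWegerSlice r x u := by
  rw [mem_deWegerSlice, mem_deWegerSlice, div_lt_iff₀ hr, div_lt_iff₀ hr (b := u), mul_comm t u,
    mul_comm u r, mul_comm r t]
  tauto

lemma measurableSet_coneSlice (r y t : ℝ) : MeasurableSet (coneSlice r y t) :=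
  (measurableSet_lt measurable_const measurable_id).inter
    ((measurableSet_lt measurable_id measurable_const).inter
      (measurableSet_le (measurable_id.const_mul t) measurable_const))

lemma measurableSet_deWegerSlice (r x t : ℝ) : MeasurableSet (deWegerSlice r x t) :=
  (measurableSet_coneSlice r x t).diff (measurableSet_coneSlice r (x / r) t)

lemma coneSlice_subset_Ioc (ht : 0 < t) : coneSlice r y t ⊆ Ioc (t / r) (min (r * t) (y / t)) :=
  fun _ ⟨hlower, hupper, hmul⟩ => ⟨hlower, le_min hupper.le ((le_div_iff₀' ht).mpr hmul)⟩

lemma Ioo_subset_coneSlice (ht : 0 < t) : Ioo (t / r) (min (r * t) (y / t)) ⊆ coneSlice r y t :=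
  fun _ ⟨hlower, hupper⟩ => ⟨hlower, hupper.trans_le (min_le_left _ _),
    (le_div_iff₀' ht).mp (hupper.le.trans (min_le_right _ _))⟩

lemma volume_real_coneSlice (ht : 0 < t) :
    volume.real (coneSlice r y t) = max (min (r * t) (y / t) - t / r) 0 :=
  volume_real_eq_of_Ioo_subset_of_subset_Ioc (Ioo_subset_coneSlice ht) (coneSlice_subset_Ioc ht)

lemma coneSlice_mono {y' : ℝ} (h : y ≤ y') : coneSlice r y t ⊆ coneSlice r y' t :=
  fun _ ⟨hlower, hupper, hmul⟩ => ⟨hlower, hupper, hmul.trans h⟩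

lemma volume_real_deWegerSlice (hr : 1 ≤ r) (hx : 0 ≤ x) (ht : 0 < t) :
    volume.real (deWegerSlice r x t) =
      volume.real (coneSlice r x t) - volume.real (coneSlice r (x / r) t) :=
  measureReal_sdiff (coneSlice_mono (div_le_self hx hr)) (measurableSet_coneSlice r (x / r) t)
    (ne_top_of_le_ne_top measure_Ioc_lt_top.ne (measure_mono (coneSlice_subset_Ioc ht)))

lemma mem_Ioo_of_mem_deWegerSlice (hr : 0 < r) (hx : 0 ≤ x) (ht : 0 < t)
    (hu : u ∈ deWegerSlice r x t) : t ∈ Ioo (√x / r) √(x * r) := by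
  obtain ⟨hlower, hupper, hgt, hle⟩ := mem_deWegerSlice.mp hu
  rw [div_lt_iff₀ hr] at hlower hgt
  constructor
  · rw [div_lt_iff₀ hr, Real.sqrt_lt hx (by positivity)]
    calc x < t * u * r := hgt
      _ < t * (r * t) * r := by gcongr
      _ = (t * r) ^ 2 := by ring
  · refine Real.lt_sqrt_of_sq_lt ?_
    calc t ^ 2 = t * t := sq t
      _ < t * (u * r) := by gcongr
      _ = t * u * r := by ring
      _ ≤ x * r := by gcongr

variable {K α : ℝ} {N : ℕ}

lemma abs_primeLogSum_coneSlice_sub_volume_le (hα : 0 ≤ α) (hK : 0 ≤ K)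
    (htheta : ∀ c : ℝ, 0 ≤ c → |Chebyshev.theta c - c| ≤ K * c ^ α) (hr : 0 ≤ r) (hy : 0 ≤ y)
    (ht : 1 ≤ t) (hN : ⌊y⌋₊ ≤ N) :
    |primeLogSum N (coneSlice r y t) - volume.real (coneSlice r y t)| ≤
      2 * (K * (y / t) ^ α) := by
  have ht0 : 0 < t := zero_lt_one.trans_le ht
  have hfloor : ⌊min (r * t) (y / t)⌋₊ ≤ N :=
    (Nat.floor_mono ((min_le_right _ _).trans (div_le_self hy ht))).trans hN
  refine abs_primeLogSum_sub_volume_le (by positivity) hfloor (Ioo_subset_coneSlice ht0)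
    (coneSlice_subset_Ioc ht0) (by positivity) fun c hc => ?_
  have hc0 : 0 ≤ c := le_trans (by positivity) hc.1
  refine (htheta c hc0).trans ?_
  gcongr
  exact hc.2.trans (min_le_right _ _)

lemma abs_primeLogSum_deWegerSlice_sub_volume_le (hα : 0 ≤ α) (hK : 0 ≤ K)
    (htheta : ∀ c : ℝ, 0 ≤ c → |Chebyshev.theta c - c| ≤ K * c ^ α) (hr : 1 ≤ r) (hx : 0 ≤ x)
    (ht : 1 ≤ t) (hN : ⌊x⌋₊ ≤ N) :
    |primeLogSum N (deWegerSlice r x t) - volume.real (deWegerSlice r x t)| ≤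
      4 * K * (x / t) ^ α := by
  have hr0 : 0 ≤ r := zero_le_one.trans hr
  have hxr : x / r ≤ x := div_le_self hx hr
  have houter := abs_primeLogSum_coneSlice_sub_volume_le hα hK htheta hr0 hx ht hN
  have hinner := abs_primeLogSum_coneSlice_sub_volume_le hα hK htheta hr0 (div_nonneg hx hr0) ht
    ((Nat.floor_mono hxr).trans hN)
  have hmono : K * (x / r / t) ^ α ≤ K * (x / t) ^ α := by gcongr
  rw [volume_real_deWegerSlice hr hx (by linarith), deWegerSlice,
    primeLogSum_sdiff (coneSlice_mono hxr), sub_sub_sub_comm]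
  refine (abs_sub _ _).trans ?_
  linarith

end Slices

section SliceIntegrals

variable {r x y t a b m : ℝ} {N : ℕ}

lemma volume_real_coneSlice_of_le (hr : 1 ≤ r) (ht : 0 < t) (htm : t ≤ m) :
    volume.real (coneSlice r (r * m ^ 2) t) = (r - r⁻¹) * t := by
  have hmin : r * t ≤ r * m ^ 2 / t := by
    rw [le_div_iff₀ ht, mul_assoc, ← sq]
    gcongr
  have hinv : r⁻¹ ≤ r := (inv_le_one_of_one_le₀ hr).trans hr
  have hmul : r * t - t / r = (r - r⁻¹) * t := by ring
  rw [volume_real_coneSlice ht, min_eq_left hmin, hmul]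
  exact max_eq_left (mul_nonneg (sub_nonneg.mpr hinv) ht.le)

lemma volume_real_coneSlice_of_mem_Icc (hr : 0 < r) (hm : 0 < m) (ht : t ∈ Icc m (r * m)) :
    volume.real (coneSlice r (r * m ^ 2) t) = r * m ^ 2 * t⁻¹ - r⁻¹ * t := by
  have ht0 : 0 < t := hm.trans_le ht.1
  have hmin : r * m ^ 2 / t ≤ r * t := by
    rw [div_le_iff₀ ht0, mul_assoc, ← sq]
    exact mul_le_mul_of_nonneg_left (pow_le_pow_left₀ hm.le ht.1 2) hr.le
  have hmax : t / r ≤ r * m ^ 2 / t := by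
    rw [div_le_div_iff₀ hr ht0]
    calc t * t ≤ (r * m) * (r * m) := mul_self_le_mul_self ht0.le ht.2
      _ = r * m ^ 2 * r := by ring
  rw [volume_real_coneSlice ht0, min_eq_right hmin, max_eq_left (sub_nonneg.mpr hmax)]
  ring

lemma volume_real_coneSlice_of_ge (hr : 0 < r) (hm : 0 < m) (ht : r * m ≤ t) :
    volume.real (coneSlice r (r * m ^ 2) t) = 0 := by
  have ht0 : 0 < t := (mul_pos hr hm).trans_le ht
  have hmax : r * m ^ 2 / t ≤ t / r := by
    rw [div_le_div_iff₀ ht0 hr]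
    calc r * m ^ 2 * r = (r * m) * (r * m) := by ring
      _ ≤ t * t := mul_self_le_mul_self (by positivity) ht
  rw [volume_real_coneSlice ht0]
  exact max_eq_right (sub_nonpos.mpr ((min_le_right _ _).trans hmax))

lemma intervalIntegrable_volume_coneSlice (r y : ℝ) (ha : 0 < a) (hb : 0 < b) :
    IntervalIntegrable (fun t => volume.real (coneSlice r y t)) volume a b := by
  have hpos : ∀ t ∈ uIcc a b, 0 < t := fun t ht => (lt_min ha hb).trans_le ht.1
  have hcont : ContinuousOn (fun t => max (min (r * t) (y / t) - t / r) 0) (uIcc a b) := by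
    have hdiv : ContinuousOn (fun t => y / t) (uIcc a b) :=
      continuousOn_const.div continuousOn_id fun t ht => (hpos t ht).ne'
    fun_prop
  exact (hcont.congr fun t ht => volume_real_coneSlice (hpos t ht)).intervalIntegrable

lemma integral_volume_coneSlice_mid (hr : 1 ≤ r) (hm : 0 < m) :
    ∫ t in m..r * m, volume.real (coneSlice r (r * m ^ 2) t) =
      r * m ^ 2 * Real.log r - r⁻¹ * (((r * m) ^ 2 - m ^ 2) / 2) := by
  have hr0 : 0 < r := zero_lt_one.trans_le hr
  have hrm : 0 < r * m := mul_pos hr0 hm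
  have hinv : ∫ t in m..r * m, t⁻¹ = Real.log r := by
    rw [integral_inv_of_pos hm hrm, mul_div_cancel_right₀ _ hm.ne']
  rw [← hinv, ← integral_id, ← intervalIntegral.integral_const_mul,
    ← intervalIntegral.integral_const_mul, ← intervalIntegral.integral_sub]
  · refine intervalIntegral.integral_congr fun t ht => ?_
    rw [uIcc_of_le (le_mul_of_one_le_left hm.le hr)] at ht
    exact volume_real_coneSlice_of_mem_Icc hr0 hm ht
  · refine (intervalIntegral.intervalIntegrable_inv (fun t ht => ?_)
      continuousOn_id).const_mul _
    exact ((lt_min hm hrm).trans_le ht.1).ne'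
  · exact intervalIntegral.intervalIntegrable_id.const_mul _

lemma integral_volume_coneSlice (hr : 1 ≤ r) (ha : 0 < a) (ham : a ≤ m) (hmb : r * m ≤ b) :
    ∫ t in a..b, volume.real (coneSlice r (r * m ^ 2) t) =
      r * m ^ 2 * Real.log r - (r - r⁻¹) * a ^ 2 / 2 := by
  have hr0 : 0 < r := zero_lt_one.trans_le hr
  have hm : 0 < m := ha.trans_le ham
  have hrm : 0 < r * m := mul_pos hr0 hm
  have hb : 0 < b := hrm.trans_le hmb
  have hlow : ∫ t in a..m, volume.real (coneSlice r (r * m ^ 2) t) =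
      (r - r⁻¹) * ((m ^ 2 - a ^ 2) / 2) := by
    rw [← integral_id, ← intervalIntegral.integral_const_mul]
    refine intervalIntegral.integral_congr fun t ht => ?_
    rw [uIcc_of_le ham] at ht
    exact volume_real_coneSlice_of_le hr (ha.trans_le ht.1) ht.2
  have hhigh : ∫ t in r * m..b, volume.real (coneSlice r (r * m ^ 2) t) = 0 := by
    refine intervalIntegral.integral_zero_ae (ae_of_all _ fun t ht => ?_)
    rw [uIoc_of_le hmb] at ht
    exact volume_real_coneSlice_of_ge hr0 hm ht.1.le
  rw [← intervalIntegral.integral_add_adjacent_intervals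
      (intervalIntegrable_volume_coneSlice r _ ha hrm)
      (intervalIntegrable_volume_coneSlice r _ hrm hb),
    ← intervalIntegral.integral_add_adjacent_intervals
      (intervalIntegrable_volume_coneSlice r _ ha hm)
      (intervalIntegrable_volume_coneSlice r _ hm hrm), hlow,
    integral_volume_coneSlice_mid hr hm, hhigh]
  field_simp
  ring

lemma intervalIntegrable_volume_deWegerSlice (hr : 1 ≤ r) (hx : 0 ≤ x) (ha : 0 < a) (hb : 0 < b) :
    IntervalIntegrable (fun t => volume.real (deWegerSlice r x t)) volume a b := by
  refine ((intervalIntegrable_volume_coneSlice r x ha hb).sub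
    (intervalIntegrable_volume_coneSlice r (x / r) ha hb)).congr fun t ht => ?_
  exact (volume_real_deWegerSlice hr hx ((lt_min ha hb).trans ht.1)).symm

lemma integral_volume_deWegerSlice (hr : 1 ≤ r) (hx : 0 < x) :
    ∫ t in √x / r..√(x * r), volume.real (deWegerSlice r x t) =
      x * (Real.log r - Real.log r / r) := by
  have hr0 : 0 < r := zero_lt_one.trans_le hr
  have hP : 0 < √x / r := by positivity
  have hQ : 0 < √(x * r) := by positivity
  have houter : x = r * √(x / r) ^ 2 := by
    rw [Real.sq_sqrt (by positivity), mul_div_cancel₀ _ hr0.ne']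
  have hinner : x / r = r * (√x / r) ^ 2 := by
    rw [div_pow, Real.sq_sqrt hx.le]
    field_simp
  have hPm : √x / r ≤ √(x / r) := by
    refine Real.le_sqrt_of_sq_le ?_
    rw [div_pow, Real.sq_sqrt hx.le]
    gcongr
    exact le_self_pow₀ hr two_ne_zero
  have hmQ : r * √(x / r) ≤ √(x * r) := by
    refine Real.le_sqrt_of_sq_le (le_of_eq ?_)
    rw [mul_pow, Real.sq_sqrt (by positivity)]
    field_simp
  have hPQ : r * (√x / r) ≤ √(x * r) := by
    rw [mul_div_cancel₀ _ hr0.ne']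
    exact Real.sqrt_le_sqrt (le_mul_of_one_le_right hx.le hr)
  have hsplit : ∫ t in √x / r..√(x * r), volume.real (deWegerSlice r x t) =
      (∫ t in √x / r..√(x * r), volume.real (coneSlice r x t)) -
        ∫ t in √x / r..√(x * r), volume.real (coneSlice r (x / r) t) := by
    rw [← intervalIntegral.integral_sub (intervalIntegrable_volume_coneSlice r x hP hQ)
      (intervalIntegrable_volume_coneSlice r (x / r) hP hQ)]
    refine intervalIntegral.integral_congr fun t ht => ?_
    exact volume_real_deWegerSlice hr hx.le ((lt_min hP hQ).trans_le ht.1)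
  have houter_integral := integral_volume_coneSlice hr hP hPm hmQ
  have hinner_integral := integral_volume_coneSlice hr hP le_rfl hPQ
  rw [← houter] at houter_integral
  rw [← hinner] at hinner_integral
  rw [hsplit, houter_integral, hinner_integral]
  ring

lemma primeLogSum_deWegerSlice (hr : 0 < r) (x t : ℝ) (N : ℕ) :
    primeLogSum N (deWegerSlice r x t) =
      ∑ q ∈ Nat.primesLE N, (deWegerSlice r x q).indicator (fun _ => Real.log q) t := by
  classical
  refine Finset.sum_congr rfl fun q _ => ?_
  rw [indicator_apply, indicator_apply, mem_deWegerSlice_comm hr]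

lemma deWegerSlice_subset_Ioc (hr : 0 < r) (hx : 0 ≤ x) (ht : 0 < t) :
    deWegerSlice r x t ⊆ Ioc (√x / r) √(x * r) := fun _ hu =>
  Ioo_subset_Ioc_self <| mem_Ioo_of_mem_deWegerSlice hr hx
    ((div_pos ht hr).trans (mem_deWegerSlice.mp hu).1) ((mem_deWegerSlice_comm hr).mp hu)

lemma intervalIntegrable_primeLogSum_deWegerSlice (hr : 0 < r) (x : ℝ) (N : ℕ) :
    IntervalIntegrable (fun t => primeLogSum N (deWegerSlice r x t)) volume a b := by
  simp only [primeLogSum_deWegerSlice hr]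
  refine intervalIntegrable_iff.mpr (integrable_finsetSum _ fun q _ => ?_)
  exact (integrableOn_const measure_Ioc_lt_top.ne).indicator (measurableSet_deWegerSlice r x q)

lemma sqrt_div_le_sqrt_mul (hr : 1 ≤ r) (hx : 0 ≤ x) : √x / r ≤ √(x * r) :=
  (div_le_self (Real.sqrt_nonneg x) hr).trans
    (Real.sqrt_le_sqrt (le_mul_of_one_le_right hx hr))

lemma integral_primeLogSum_deWegerSlice (hr : 1 ≤ r) (hx : 0 ≤ x) (N : ℕ) :
    ∫ t in √x / r..√(x * r), primeLogSum N (deWegerSlice r x t) =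
      ∑ q ∈ Nat.primesLE N, Real.log q * volume.real (deWegerSlice r x q) := by
  have hr0 : 0 < r := zero_lt_one.trans_le hr
  have hPQ := sqrt_div_le_sqrt_mul hr hx
  simp only [primeLogSum_deWegerSlice hr0]
  rw [intervalIntegral.integral_of_le hPQ, integral_finsetSum]
  · refine Finset.sum_congr rfl fun q hq => ?_
    have hq0 : (0 : ℝ) < q := Nat.cast_pos.mpr (Nat.prime_of_mem_primesLE hq).pos
    rw [integral_indicator (measurableSet_deWegerSlice r x q),
      Measure.restrict_restrict_of_subset (deWegerSlice_subset_Ioc hr0 hx hq0),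
      setIntegral_const, smul_eq_mul, mul_comm]
  · exact fun q _ => (integrableOn_const measure_Ioc_lt_top.ne).indicator
      (measurableSet_deWegerSlice r x q)

end SliceIntegrals

lemma sum_Ioc_floor_le_add_integral {f : ℝ → ℝ} {a b : ℝ} (ha : 0 ≤ a) (hab : a ≤ b)
    (hf : AntitoneOn f (Icc a b)) (hf0 : ∀ t ∈ Icc a b, 0 ≤ f t) :
    ∑ n ∈ Finset.Ioc ⌊a⌋₊ ⌊b⌋₊, f n ≤ f a + ∫ t in a..b, f t := by
  rcases lt_or_ge ⌊a⌋₊ ⌊b⌋₊ with hlt | hge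
  · have ham : a ≤ (⌊a⌋₊ + 1 : ℕ) := by exact_mod_cast (Nat.lt_floor_add_one a).le
    have hmn : ((⌊a⌋₊ + 1 : ℕ) : ℝ) ≤ ⌊b⌋₊ := Nat.cast_le.mpr hlt
    have hnb : (⌊b⌋₊ : ℝ) ≤ b := Nat.floor_le (ha.trans hab)
    have hsum : ∑ n ∈ Finset.Ioc (⌊a⌋₊ + 1) ⌊b⌋₊, f n =
        ∑ n ∈ Finset.Ico (⌊a⌋₊ + 1) ⌊b⌋₊, f (n + 1 : ℕ) := by
      rw [Finset.sum_Ico_add' (fun n : ℕ => f n), Finset.Ico_add_one_add_one_eq_Ioc]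
    have hint : ∫ t in (⌊a⌋₊ + 1 : ℕ)..⌊b⌋₊, f t ≤ ∫ t in a..b, f t := by
      refine intervalIntegral.integral_mono_interval ham hmn hnb ?_
        (AntitoneOn.intervalIntegrable (by rwa [uIcc_of_le hab]))
      filter_upwards [ae_restrict_mem measurableSet_Ioc] with t ht
      exact hf0 t (Ioc_subset_Icc_self ht)
    calc ∑ n ∈ Finset.Ioc ⌊a⌋₊ ⌊b⌋₊, f n
        = f (⌊a⌋₊ + 1 : ℕ) + ∑ n ∈ Finset.Ico (⌊a⌋₊ + 1) ⌊b⌋₊, f (n + 1 : ℕ) := by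
          rw [← hsum, ← Finset.sum_Ioc_consecutive _ (Nat.le_succ _) hlt, Nat.succ_eq_add_one,
            Nat.Ioc_succ_singleton, Finset.sum_singleton]
      _ ≤ f a + ∫ t in (⌊a⌋₊ + 1 : ℕ)..⌊b⌋₊, f t :=
          add_le_add (hf ⟨le_rfl, hab⟩ ⟨ham, hmn.trans hnb⟩ ham)
            (AntitoneOn.sum_le_integral_Ico hlt (hf.mono (Icc_subset_Icc ham hnb)))
      _ ≤ f a + ∫ t in a..b, f t := by gcongr
  · rw [Finset.Ioc_eq_empty_of_le hge, Finset.sum_empty]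
    exact add_nonneg (hf0 a ⟨le_rfl, hab⟩) (intervalIntegral.integral_nonneg hab hf0)

/-- The count `NDM r x` with each prime pair `(p, q)` weighted by `log p * log q`. -/
noncomputable def deWegerLogSum (r x : ℝ) : ℝ :=
  ∑ p ∈ Nat.primesLE ⌊x⌋₊, Real.log p * primeLogSum ⌊x⌋₊ (deWegerSlice r x p)

section Discrepancy

variable {r x K α : ℝ}

lemma one_le_of_one_le_sqrt_div (hr : 1 ≤ r) (hP : 1 ≤ √x / r) : 1 ≤ x :=
  Real.one_le_sqrt.mp (hP.trans (div_le_self (Real.sqrt_nonneg x) hr))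

lemma antitoneOn_div_rpow (hα : 0 ≤ α) (hx : 0 ≤ x) :
    AntitoneOn (fun t : ℝ => (x / t) ^ α) (Ioi 0) := fun t ht u hu htu => by
  have ht0 : 0 < t := ht
  have hu0 : 0 < u := hu
  dsimp only
  gcongr

lemma intervalIntegrable_div_rpow (hα : 0 ≤ α) (hx : 0 ≤ x) {a b : ℝ} (ha : 0 < a) (hb : 0 < b) :
    IntervalIntegrable (fun t : ℝ => (x / t) ^ α) volume a b :=
  ((antitoneOn_div_rpow hα hx).mono fun _ ht =>
    (lt_min ha hb).trans_le ht.1).intervalIntegrable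

lemma abs_integral_primeLogSum_sub_volume_le (hα : 0 ≤ α) (hK : 0 ≤ K)
    (htheta : ∀ c : ℝ, 0 ≤ c → |Chebyshev.theta c - c| ≤ K * c ^ α)
    (hr : 1 ≤ r) (hP : 1 ≤ √x / r) :
    |∫ t in √x / r..√(x * r),
        (primeLogSum ⌊x⌋₊ (deWegerSlice r x t) - volume.real (deWegerSlice r x t))| ≤
      4 * K * ∫ t in √x / r..√(x * r), (x / t) ^ α := by
  have hx : 0 ≤ x := zero_le_one.trans (one_le_of_one_le_sqrt_div hr hP)
  have hPQ := sqrt_div_le_sqrt_mul hr hx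
  rw [← intervalIntegral.integral_const_mul, ← Real.norm_eq_abs]
  refine intervalIntegral.norm_integral_le_of_norm_le hPQ (ae_of_all _ fun t ht => ?_) ?_
  · exact abs_primeLogSum_deWegerSlice_sub_volume_le hα hK htheta hr hx (hP.trans ht.1.le) le_rfl
  · have hP0 : 0 < √x / r := zero_lt_one.trans_le hP
    exact (intervalIntegrable_div_rpow hα hx hP0 (hP0.trans_le hPQ)).const_mul _

lemma abs_primeLogSum_deWegerSlice_natCast_sub_volume_le (hα : 0 ≤ α) (hK : 0 ≤ K)
    (htheta : ∀ c : ℝ, 0 ≤ c → |Chebyshev.theta c - c| ≤ K * c ^ α)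
    (hr : 1 ≤ r) (hx : 0 ≤ x) {n : ℕ} (hn : 0 < n) :
    |primeLogSum ⌊x⌋₊ (deWegerSlice r x n) - volume.real (deWegerSlice r x n)| ≤
      if n ∈ Finset.Ioc ⌊√x / r⌋₊ ⌊√(x * r)⌋₊ then 4 * K * (x / n) ^ α else 0 := by
  have hr0 : 0 < r := zero_lt_one.trans_le hr
  split_ifs with hmem
  · exact abs_primeLogSum_deWegerSlice_sub_volume_le hα hK htheta hr hx (Nat.one_le_cast.mpr hn)
      le_rfl
  · have hempty : deWegerSlice r x n = ∅ := by
      refine eq_empty_of_forall_notMem fun u hu => hmem ?_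
      obtain ⟨hlower, hupper⟩ := mem_Ioo_of_mem_deWegerSlice hr0 hx (Nat.cast_pos.mpr hn) hu
      exact Finset.mem_Ioc.mpr ⟨(Nat.floor_lt (by positivity)).mpr hlower, Nat.le_floor hupper.le⟩
    rw [hempty, primeLogSum_empty, measureReal_empty, sub_zero, abs_zero]

lemma abs_sum_log_mul_primeLogSum_sub_volume_le (hα : 0 ≤ α) (hK : 0 ≤ K)
    (htheta : ∀ c : ℝ, 0 ≤ c → |Chebyshev.theta c - c| ≤ K * c ^ α)
    (hr : 1 ≤ r) (hP : 1 ≤ √x / r) :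
    |∑ p ∈ Nat.primesLE ⌊x⌋₊, Real.log p *
        (primeLogSum ⌊x⌋₊ (deWegerSlice r x p) - volume.real (deWegerSlice r x p))| ≤
      4 * K * Real.log x *
        ((x / (√x / r)) ^ α + ∫ t in √x / r..√(x * r), (x / t) ^ α) := by
  have hx1 : 1 ≤ x := one_le_of_one_le_sqrt_div hr hP
  have hx : 0 ≤ x := zero_le_one.trans hx1
  have hP0 : 0 < √x / r := zero_lt_one.trans_le hP
  set I := Finset.Ioc ⌊√x / r⌋₊ ⌊√(x * r)⌋₊
  have hterm : ∀ p ∈ Nat.primesLE ⌊x⌋₊, |Real.log p *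
      (primeLogSum ⌊x⌋₊ (deWegerSlice r x p) - volume.real (deWegerSlice r x p))| ≤
        if p ∈ I then 4 * K * Real.log x * (x / p) ^ α else 0 := fun p hp => by
    have hp0 : 0 < p := (Nat.prime_of_mem_primesLE hp).pos
    have hpx : (p : ℝ) ≤ x := (Nat.le_floor_iff hx).mp (Nat.le_of_mem_primesLE hp)
    have hlog : Real.log p ≤ Real.log x := Real.log_le_log (Nat.cast_pos.mpr hp0) hpx
    rw [abs_mul, abs_of_nonneg (Real.log_natCast_nonneg p)]
    refine (mul_le_mul hlog (abs_primeLogSum_deWegerSlice_natCast_sub_volume_le hα hK htheta hr hx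
      hp0) (abs_nonneg _) (Real.log_nonneg hx1)).trans_eq ?_
    rw [mul_ite, mul_zero, ← mul_assoc, mul_comm (Real.log x)]
  calc _ ≤ ∑ p ∈ Nat.primesLE ⌊x⌋₊, if p ∈ I then 4 * K * Real.log x * (x / p) ^ α else 0 :=
        (Finset.abs_sum_le_sum_abs _ _).trans (Finset.sum_le_sum hterm)
    _ ≤ ∑ n ∈ I, 4 * K * Real.log x * (x / n) ^ α := by
        rw [← Finset.sum_filter]
        have := Real.log_nonneg hx1
        exact Finset.sum_le_sum_of_subset_of_nonneg
          (fun p hp => (Finset.mem_filter.mp hp).2) fun n _ _ => by positivity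
    _ ≤ _ := by
        rw [← Finset.mul_sum]
        have := Real.log_nonneg hx1
        gcongr
        exact sum_Ioc_floor_le_add_integral (f := fun t => (x / t) ^ α) hP0.le
          (sqrt_div_le_sqrt_mul hr hx)
          ((antitoneOn_div_rpow hα hx).mono fun t ht => hP0.trans_le ht.1)
          fun t ht => Real.rpow_nonneg (div_nonneg hx (hP0.le.trans ht.1)) α

lemma deWegerLogSum_sub_eq (hr : 1 ≤ r) (hx : 0 < x) :
    deWegerLogSum r x - x * (Real.log r - Real.log r / r) =
      (∑ p ∈ Nat.primesLE ⌊x⌋₊, Real.log p *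
        (primeLogSum ⌊x⌋₊ (deWegerSlice r x p) - volume.real (deWegerSlice r x p))) +
      ∫ t in √x / r..√(x * r),
        (primeLogSum ⌊x⌋₊ (deWegerSlice r x t) - volume.real (deWegerSlice r x t)) := by
  have hr0 : 0 < r := zero_lt_one.trans_le hr
  rw [intervalIntegral.integral_sub (intervalIntegrable_primeLogSum_deWegerSlice hr0 x ⌊x⌋₊)
      (intervalIntegrable_volume_deWegerSlice hr hx.le (by positivity) (by positivity)),
    integral_primeLogSum_deWegerSlice hr hx.le, integral_volume_deWegerSlice hr hx]
  simp only [deWegerLogSum, mul_sub, Finset.sum_sub_distrib]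
  ring

lemma abs_deWegerLogSum_sub_le (hα : 0 ≤ α) (hK : 0 ≤ K)
    (htheta : ∀ c : ℝ, 0 ≤ c → |Chebyshev.theta c - c| ≤ K * c ^ α)
    (hr : 1 ≤ r) (hP : 1 ≤ √x / r) :
    |deWegerLogSum r x - x * (Real.log r - Real.log r / r)| ≤
      4 * K * (Real.log x + 1) *
        ((x / (√x / r)) ^ α + ∫ t in √x / r..√(x * r), (x / t) ^ α) := by
  have hx : 0 < x := zero_lt_one.trans_le (one_le_of_one_le_sqrt_div hr hP)
  have hsum := abs_sum_log_mul_primeLogSum_sub_volume_le hα hK htheta hr hP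
  have hint := abs_integral_primeLogSum_sub_volume_le hα hK htheta hr hP
  have hfirst : 0 ≤ 4 * K * (x / (√x / r)) ^ α := by positivity
  rw [deWegerLogSum_sub_eq hr hx]
  refine (abs_add_le _ _).trans ?_
  linarith

end Discrepancy

section Absorption

variable {r x : ℝ}

lemma integral_div_rpow_three_fifths_le (hr : 1 ≤ r) (hx : 0 < x) :
    ∫ t in √x / r..√(x * r), (x / t) ^ (3 / 5 : ℝ) ≤
      5 / 2 * ((1 - r⁻¹) * (x ^ (4 / 5 : ℝ) * r ^ (1 / 5 : ℝ))) := by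
  have hr0 : 0 < r := zero_lt_one.trans_le hr
  have hP : 0 < √x / r := by positivity
  have hQ : 0 < √(x * r) := by positivity
  have hupper : √(x * r) ^ (2 / 5 : ℝ) = x ^ (1 / 5 : ℝ) * r ^ (1 / 5 : ℝ) := by
    rw [Real.sqrt_eq_rpow, ← Real.rpow_mul (by positivity), Real.mul_rpow hx.le hr0.le]
    norm_num
  have hlower : (√x / r) ^ (2 / 5 : ℝ) = x ^ (1 / 5 : ℝ) * r ^ (1 / 5 : ℝ) * r ^ (-3 / 5 : ℝ) := by
    rw [Real.div_rpow (by positivity) hr0.le, Real.sqrt_eq_rpow, ← Real.rpow_mul hx.le, mul_assoc,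
      ← Real.rpow_add hr0, div_eq_mul_inv, ← Real.rpow_neg hr0.le]
    norm_num
  have hx45 : x ^ (4 / 5 : ℝ) = x ^ (3 / 5 : ℝ) * x ^ (1 / 5 : ℝ) := by
    rw [← Real.rpow_add hx]
    norm_num
  have hinv : r⁻¹ ≤ r ^ (-3 / 5 : ℝ) := by
    rw [← Real.rpow_neg_one]
    exact Real.rpow_le_rpow_of_exponent_le hr (by norm_num)
  calc ∫ t in √x / r..√(x * r), (x / t) ^ (3 / 5 : ℝ)
      = ∫ t in √x / r..√(x * r), x ^ (3 / 5 : ℝ) * t ^ (-3 / 5 : ℝ) := by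
        refine intervalIntegral.integral_congr fun t ht => ?_
        have ht0 : 0 < t := (lt_min hP hQ).trans_le ht.1
        rw [Real.div_rpow hx.le ht0.le, div_eq_mul_inv, ← Real.rpow_neg ht0.le, neg_div]
    _ = 5 / 2 * ((1 - r ^ (-3 / 5 : ℝ)) * (x ^ (4 / 5 : ℝ) * r ^ (1 / 5 : ℝ))) := by
        rw [intervalIntegral.integral_const_mul, integral_rpow (Or.inl (by norm_num)),
          show (-3 / 5 + 1 : ℝ) = 2 / 5 by norm_num, hupper, hlower, hx45]
        ring
    _ ≤ 5 / 2 * ((1 - r⁻¹) * (x ^ (4 / 5 : ℝ) * r ^ (1 / 5 : ℝ))) := by gcongr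

lemma le_mul_add_div_sq_of_pow_three_le {u v z m : ℝ} (hu : 0 ≤ u) (hz : 0 < z) (hm : 0 < m)
    (hv : 0 ≤ v) (h : u ^ 3 ≤ z ^ 2 * v) : u ≤ m * z + v / m ^ 2 := by
  rcases le_or_gt u (m * z) with hle | hgt
  · exact hle.trans (le_add_of_nonneg_right (by positivity))
  · have hsq : (m * z) ^ 2 ≤ u ^ 2 := by gcongr
    have hmul : z ^ 2 * (m ^ 2 * u) ≤ z ^ 2 * v := by
      calc z ^ 2 * (m ^ 2 * u) = (m * z) ^ 2 * u := by ring
        _ ≤ u ^ 2 * u := by gcongr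
        _ = u ^ 3 := by ring
        _ ≤ z ^ 2 * v := h
    have huv : u ≤ v / m ^ 2 :=
      (le_div_iff₀' (by positivity)).mpr (le_of_mul_le_mul_left hmul (by positivity))
    exact huv.trans (le_add_of_nonneg_left (by positivity))

lemma log_pow_three_le (hx : 1 ≤ x) : Real.log x ^ 3 ≤ 27000 * x ^ (1 / 10 : ℝ) := by
  have hx0 : 0 ≤ x := zero_le_one.trans hx
  have hlog := Real.log_le_rpow_div hx0 (by norm_num : (0 : ℝ) < 1 / 30)
  calc Real.log x ^ 3 ≤ (x ^ (1 / 30 : ℝ) / (1 / 30)) ^ 3 :=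
        pow_le_pow_left₀ (Real.log_nonneg hx) hlog 3
    _ = 27000 * x ^ (1 / 10 : ℝ) := by
        rw [div_pow, ← Real.rpow_natCast (x ^ (1 / 30 : ℝ)), ← Real.rpow_mul hx0]
        norm_num
        ring

lemma one_sub_inv_pow_three_mul_rpow_le (hr : 1 ≤ r) (hx : 1 < x) :
    (1 - r⁻¹) ^ 3 * x ^ (9 / 10 : ℝ) ≤
      9000 * (3 * (x * (Real.log r - Real.log r / r)) * Real.log r / Real.log x ^ 3) := by
  have hr0 : 0 < r := zero_lt_one.trans_le hr
  have hx0 : 0 < x := zero_lt_one.trans hx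
  have hL : 0 < Real.log x := Real.log_pos hx
  have hlam : 0 ≤ 1 - r⁻¹ := sub_nonneg.mpr (inv_le_one_of_one_le₀ hr)
  have hlog : 1 - r⁻¹ ≤ Real.log r := Real.one_sub_inv_le_log_of_pos hr0
  have hxpow : x ^ (9 / 10 : ℝ) * x ^ (1 / 10 : ℝ) = x := by
    rw [← Real.rpow_add hx0]
    norm_num
  rw [mul_div_assoc', le_div_iff₀ (by positivity)]
  calc (1 - r⁻¹) ^ 3 * x ^ (9 / 10 : ℝ) * Real.log x ^ 3
      ≤ (1 - r⁻¹) ^ 3 * x ^ (9 / 10 : ℝ) * (27000 * x ^ (1 / 10 : ℝ)) := by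
        gcongr
        exact log_pow_three_le hx.le
    _ = 27000 * (1 - r⁻¹) ^ 3 * (x ^ (9 / 10 : ℝ) * x ^ (1 / 10 : ℝ)) := by ring
    _ = 27000 * x * (1 - r⁻¹) * (1 - r⁻¹) ^ 2 := by rw [hxpow]; ring
    _ ≤ 27000 * x * (1 - r⁻¹) * Real.log r ^ 2 := by gcongr
    _ = 9000 * (3 * (x * (Real.log r - Real.log r / r)) * Real.log r) := by ring

lemma one_sub_inv_mul_rpow_pow_three_le (hr : 1 ≤ r) (hx : 0 < x) :
    ((1 - r⁻¹) * (x ^ (4 / 5 : ℝ) * r ^ (1 / 5 : ℝ))) ^ 3 ≤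
      (x ^ (3 / 4 : ℝ) * r ^ (1 / 2 : ℝ)) ^ 2 * ((1 - r⁻¹) ^ 3 * x ^ (9 / 10 : ℝ)) := by
  have hr0 : 0 < r := zero_lt_one.trans_le hr
  have hlam : 0 ≤ 1 - r⁻¹ := sub_nonneg.mpr (inv_le_one_of_one_le₀ hr)
  have hrpow : r ^ (3 / 5 : ℝ) ≤ r := Real.rpow_le_self_of_one_le hr (by norm_num)
  calc ((1 - r⁻¹) * (x ^ (4 / 5 : ℝ) * r ^ (1 / 5 : ℝ))) ^ 3
      = (1 - r⁻¹) ^ 3 * x ^ (12 / 5 : ℝ) * r ^ (3 / 5 : ℝ) := by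
        rw [mul_pow, mul_pow, ← Real.rpow_mul_natCast hx.le, ← Real.rpow_mul_natCast hr0.le]
        norm_num [mul_assoc]
    _ ≤ (1 - r⁻¹) ^ 3 * x ^ (12 / 5 : ℝ) * r := by gcongr
    _ = (x ^ (3 / 4 : ℝ) * r ^ (1 / 2 : ℝ)) ^ 2 * ((1 - r⁻¹) ^ 3 * x ^ (9 / 10 : ℝ)) := by
        rw [mul_pow, ← Real.rpow_mul_natCast hx.le, ← Real.rpow_mul_natCast hr0.le,
          show (12 / 5 : ℝ) = 3 / 4 * (2 : ℕ) + 9 / 10 by norm_num, Real.rpow_add hx]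
        norm_num
        ring

/- The left-hand side can exceed `x ^ (3 / 4) * r ^ (1 / 2)` when `r` is small; it is then dominated
by the gap that the interval for `ã` leaves around the main term, the last summand on the right. -/
lemma exists_mul_rpow_le_add_gap {κ : ℝ} (hκ : 0 ≤ κ) :
    ∃ B, 0 ≤ B ∧ ∀ r x : ℝ, 1 ≤ r → 1 < x →
      κ * ((1 - r⁻¹) * (x ^ (4 / 5 : ℝ) * r ^ (1 / 5 : ℝ))) ≤
        B * (x ^ (3 / 4 : ℝ) * r ^ (1 / 2 : ℝ)) +
          3 * (x * (Real.log r - Real.log r / r)) * Real.log r / Real.log x ^ 3 := by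
  set m := 9000 * κ + 1
  have hm : 1 ≤ m := le_add_of_nonneg_left (by positivity)
  have hm0 : 0 < m := zero_lt_one.trans_le hm
  refine ⟨κ * m, by positivity, fun r x hr hx => ?_⟩
  have hx0 : 0 < x := zero_lt_one.trans hx
  have hlam : 0 ≤ 1 - r⁻¹ := sub_nonneg.mpr (inv_le_one_of_one_le₀ hr)
  set v := (1 - r⁻¹) ^ 3 * x ^ (9 / 10 : ℝ)
  set gap := 3 * (x * (Real.log r - Real.log r / r)) * Real.log r / Real.log x ^ 3
  have hv0 : 0 ≤ v := by positivity
  have hvgap : v ≤ 9000 * gap := one_sub_inv_pow_three_mul_rpow_le hr hx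
  have hgap0 : 0 ≤ gap := by linarith
  have hu := le_mul_add_div_sq_of_pow_three_le (by positivity) (by positivity) hm0 hv0
    (one_sub_inv_mul_rpow_pow_three_le hr hx0)
  have hκm : κ * (v / m ^ 2) ≤ gap := by
    rw [mul_div_assoc', div_le_iff₀ (by positivity)]
    calc κ * v ≤ κ * (9000 * gap) := by gcongr
      _ ≤ gap * m := by linarith
      _ ≤ gap * m ^ 2 := by gcongr; exact le_self_pow₀ hm two_ne_zero
  calc _ ≤ κ * (m * (x ^ (3 / 4 : ℝ) * r ^ (1 / 2 : ℝ)) + v / m ^ 2) := by gcongr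
    _ ≤ _ := by linarith

lemma div_sqrt_div_rpow_le (hr : 1 ≤ r) (hP : 1 ≤ √x / r) :
    (x / (√x / r)) ^ (3 / 5 : ℝ) ≤ x ^ (3 / 4 : ℝ) * r ^ (1 / 2 : ℝ) := by
  have hx : 1 ≤ x := one_le_of_one_le_sqrt_div hr hP
  have hx0 : 0 ≤ x := zero_le_one.trans hx
  calc (x / (√x / r)) ^ (3 / 5 : ℝ) ≤ x ^ (3 / 5 : ℝ) := by
        gcongr
        exact div_le_self hx0 hP
    _ ≤ x ^ (3 / 4 : ℝ) := Real.rpow_le_rpow_of_exponent_le hx (by norm_num)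
    _ ≤ x ^ (3 / 4 : ℝ) * r ^ (1 / 2 : ℝ) :=
        le_mul_of_one_le_right (by positivity) (Real.one_le_rpow hr (by norm_num))

lemma exists_abs_deWegerLogSum_sub_le (hRH : RiemannHypothesis) :
    ∃ B, 0 ≤ B ∧ ∀ r x : ℝ, 1 ≤ r → 1 ≤ √x / r → 1 ≤ Real.log x →
      |deWegerLogSum r x - x * (Real.log r - Real.log r / r)| ≤
        Real.log x * (B * (x ^ (3 / 4 : ℝ) * r ^ (1 / 2 : ℝ)) +
          3 * (x * (Real.log r - Real.log r / r)) * Real.log r / Real.log x ^ 3) := by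
  obtain ⟨K, hK, htheta⟩ := exists_abs_theta_sub_le_rpow hRH
    (by norm_num : (1 / 2 : ℝ) < 3 / 5) (by norm_num)
  obtain ⟨B, hB, hgap⟩ := exists_mul_rpow_le_add_gap (κ := 20 * K) (by positivity)
  refine ⟨8 * K + B, by positivity, fun r x hr hP hL => ?_⟩
  have hx : 1 < x := (Real.log_pos_iff (zero_le_one.trans (one_le_of_one_le_sqrt_div hr hP))).mp
    (zero_lt_one.trans_le hL)
  set z := x ^ (3 / 4 : ℝ) * r ^ (1 / 2 : ℝ)
  set J := ∫ t in √x / r..√(x * r), (x / t) ^ (3 / 5 : ℝ)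
  have hJ := integral_div_rpow_three_fifths_le hr (zero_lt_one.trans hx)
  have hJ0 : 0 ≤ z + J := by
    refine add_nonneg (by positivity) (intervalIntegral.integral_nonneg
      (sqrt_div_le_sqrt_mul hr (zero_lt_one.trans hx).le) fun t ht => ?_)
    have : 0 ≤ t := le_trans (by positivity) ht.1
    positivity
  calc _ ≤ 4 * K * (Real.log x + 1) * ((x / (√x / r)) ^ (3 / 5 : ℝ) + J) :=
        abs_deWegerLogSum_sub_le (by norm_num) hK htheta hr hP
    _ ≤ 4 * K * (Real.log x + 1) * (z + J) := by
        gcongr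
        exact div_sqrt_div_rpow_le hr hP
    _ ≤ 4 * K * (Real.log x + Real.log x) * (z + J) := by gcongr
    _ = Real.log x * (8 * K * z + 8 * K * J) := by ring
    _ ≤ Real.log x * (8 * K * z + 20 * K *
          ((1 - r⁻¹) * (x ^ (4 / 5 : ℝ) * r ^ (1 / 5 : ℝ)))) := by
        gcongr _ * (_ + ?_)
        linarith [mul_le_mul_of_nonneg_left hJ hK]
    _ ≤ _ := by
        rw [add_mul, add_assoc]
        gcongr
        exact hgap r x hr hx

end Absorption

/-! ### The prime-pair count -/

section PrimePairs

variable {r x t u : ℝ}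

open scoped Classical in
lemma NDM_eq_card_filter (hx : 0 ≤ x) :
    NDM r x = ((Nat.primesLE ⌊x⌋₊ ×ˢ Nat.primesLE ⌊x⌋₊).filter
      fun pq => (pq.2 : ℝ) ∈ deWegerSlice r x pq.1).card := by
  refine Nat.subtype_card _ fun ⟨p, q⟩ => ?_
  simp only [Finset.mem_filter, Finset.mem_product, Nat.mem_primesLE, mem_deWegerSlice,
    Nat.le_floor_iff hx]
  refine ⟨fun ⟨⟨⟨_, hp⟩, _, hq⟩, hpq⟩ => ⟨hp, hq, hpq⟩, fun ⟨hp, hq, hpq⟩ =>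
    ⟨⟨⟨?_, hp⟩, ?_, hq⟩, hpq⟩⟩
  · exact (le_mul_of_one_le_right p.cast_nonneg (Nat.one_le_cast.mpr hq.one_le)).trans hpq.2.2.2
  · exact (le_mul_of_one_le_left q.cast_nonneg (Nat.one_le_cast.mpr hp.one_le)).trans hpq.2.2.2

lemma NDM_eq_sum_indicator (hx : 0 ≤ x) :
    (NDM r x : ℝ) = ∑ p ∈ Nat.primesLE ⌊x⌋₊, ∑ q ∈ Nat.primesLE ⌊x⌋₊,
      (deWegerSlice r x p).indicator (fun _ => (1 : ℝ)) q := by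
  classical
  simp only [indicator_apply]
  rw [NDM_eq_card_filter hx, ← Finset.sum_product', Finset.sum_boole]

lemma deWegerLogSum_eq_sum_indicator (r x : ℝ) :
    deWegerLogSum r x = ∑ p ∈ Nat.primesLE ⌊x⌋₊, ∑ q ∈ Nat.primesLE ⌊x⌋₊,
      (deWegerSlice r x p).indicator (fun u => Real.log p * Real.log u) q := by
  simp only [deWegerLogSum, primeLogSum, Finset.mul_sum, indicator_const_mul]

lemma log_mul_log_mem_Icc_of_mem_deWegerSlice (hr : 1 ≤ r)
    (hL : 2 * Real.log r ≤ Real.log x) (ht : 0 < t) (h : u ∈ deWegerSlice r x t) :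
    Real.log t * Real.log u ∈
      Icc (Real.log x * (Real.log x - 2 * Real.log r) / 4) (Real.log x ^ 2 / 4) := by
  obtain ⟨hlower, hupper, hgt, hle⟩ := mem_deWegerSlice.mp h
  have hr0 : 0 < r := zero_lt_one.trans_le hr
  have hu : 0 < u := (div_pos ht hr0).trans hlower
  have hx : 0 < x := (mul_pos ht hu).trans_le hle
  have hlog_lower := Real.log_lt_log (by positivity) hlower
  have hlog_upper := Real.log_lt_log hu hupper
  have hlog_gt := Real.log_lt_log (by positivity) hgt
  have hlog_le := Real.log_le_log (by positivity) hle
  rw [Real.log_div ht.ne' hr0.ne'] at hlog_lower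
  rw [Real.log_mul hr0.ne' ht.ne'] at hlog_upper
  rw [Real.log_div hx.ne' hr0.ne', Real.log_mul ht.ne' hu.ne'] at hlog_gt
  rw [Real.log_mul ht.ne' hu.ne'] at hlog_le
  have hdiff : (Real.log t - Real.log u) ^ 2 ≤ Real.log r ^ 2 :=
    sq_le_sq' (by linarith) (by linarith)
  have hsum_ge : (Real.log x - Real.log r) ^ 2 ≤ (Real.log t + Real.log u) ^ 2 :=
    pow_le_pow_left₀ (by linarith) hlog_gt.le 2
  have hsum_le : (Real.log t + Real.log u) ^ 2 ≤ Real.log x ^ 2 :=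
    pow_le_pow_left₀ (by linarith) hlog_le 2
  have hpolar : 4 * (Real.log t * Real.log u) =
    (Real.log t + Real.log u) ^ 2 - (Real.log t - Real.log u) ^ 2 := by ring
  constructor <;> linarith [hpolar, sq_nonneg (Real.log t - Real.log u)]

lemma deWegerLogSum_mem_Icc (hr : 1 ≤ r) (hx : 0 ≤ x) (hL : 2 * Real.log r ≤ Real.log x) :
    deWegerLogSum r x ∈ Icc (NDM r x * (Real.log x * (Real.log x - 2 * Real.log r) / 4))
      (NDM r x * (Real.log x ^ 2 / 4)) := by
  have hpos : ∀ p ∈ Nat.primesLE ⌊x⌋₊, (0 : ℝ) < p := fun p hp =>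
    Nat.cast_pos.mpr (Nat.prime_of_mem_primesLE hp).pos
  simp only [deWegerLogSum_eq_sum_indicator, NDM_eq_sum_indicator hx, Finset.sum_mul,
    ← indicator_mul_const, one_mul]
  constructor <;>
    refine Finset.sum_le_sum fun p hp => Finset.sum_le_sum fun q _ =>
      indicator_le_indicator' fun hq => ?_
  · exact (log_mul_log_mem_Icc_of_mem_deWegerSlice hr hL (hpos p hp) hq).1
  · exact (log_mul_log_mem_Icc_of_mem_deWegerSlice hr hL (hpos p hp) hq).2

lemma eq_and_eq_of_prime_mul_eq {p q p' q' : ℕ} (hp : p.Prime) (hp' : p'.Prime) (hq' : q'.Prime)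
    (hmul : p * q = p' * q') (hle : p ≤ q ↔ p' ≤ q') : p = p' ∧ q = q' := by
  have hdvd : p ∣ p' * q' := hmul ▸ dvd_mul_right p q
  rcases hp.dvd_mul.mp hdvd with hpp' | hpq'
  · obtain rfl := (Nat.prime_dvd_prime_iff_eq hp hp').mp hpp'
    exact ⟨rfl, Nat.eq_of_mul_eq_mul_left hp.pos hmul⟩
  · obtain rfl := (Nat.prime_dvd_prime_iff_eq hp hq').mp hpq'
    obtain rfl : q = p' := Nat.eq_of_mul_eq_mul_left hp.pos (hmul.trans (mul_comm _ _))
    lia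

lemma NDM_le_two_mul (hx : 0 ≤ x) : (NDM r x : ℝ) ≤ 2 * x := by
  classical
  have hcard : NDM r x ≤ (Finset.Ioc 0 ⌊x⌋₊ ×ˢ (Finset.univ : Finset Bool)).card := by
    rw [NDM_eq_card_filter hx]
    refine Finset.card_le_card_of_injOn (fun pq => (pq.1 * pq.2, decide (pq.1 ≤ pq.2))) ?_ ?_
    · rintro ⟨p, q⟩ hpq
      simp only [Finset.coe_filter, Finset.mem_product, Nat.mem_primesLE, mem_ofPred_eq] at hpq
      obtain ⟨⟨⟨_, hp⟩, _, hq⟩, hslice⟩ := hpq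
      have hle : (p : ℝ) * q ≤ x := (mem_deWegerSlice.mp hslice).2.2.2
      exact Finset.mem_product.mpr ⟨Finset.mem_Ioc.mpr ⟨mul_pos hp.pos hq.pos,
        Nat.le_floor (by exact_mod_cast hle)⟩, Finset.mem_univ _⟩
    · rintro ⟨p, q⟩ hpq ⟨p', q'⟩ hpq' heq
      simp only [Finset.coe_filter, Finset.mem_product, Nat.mem_primesLE, mem_ofPred_eq]
        at hpq hpq'
      simp only [Prod.mk.injEq, decide_eq_decide] at heq ⊢
      exact eq_and_eq_of_prime_mul_eq hpq.1.1.2 hpq'.1.1.2 hpq'.1.2.2 heq.1 heq.2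
  rw [Finset.card_product, Nat.card_Ioc, Finset.card_univ, Fintype.card_bool, Nat.sub_zero] at hcard
  calc (NDM r x : ℝ) ≤ ⌊x⌋₊ * 2 := by exact_mod_cast hcard
    _ ≤ x * 2 := by
        gcongr
        exact Nat.floor_le hx
    _ = 2 * x := mul_comm x 2

end PrimePairs

section Bounds

variable {r x : ℝ}

lemma gap_le_sub_div_add_sq {A L R : ℝ} (hR : 0 ≤ R) (hL : 0 < L) (hRL : R ≤ L) (hA : 0 ≤ A) :
    3 * A * R / L ^ 3 ≤ 4 * A / L ^ 2 - 4 * A / (L + R) ^ 2 := by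
  have hdiff : 4 * A / L ^ 2 - 4 * A / (L + R) ^ 2 =
      A * R * (4 * (2 * L + R)) / (L ^ 2 * (L + R) ^ 2) := by
    field_simp
    ring
  have hpoly : 3 * (L + R) ^ 2 ≤ 4 * (2 * L + R) * L := by nlinarith
  rw [hdiff, div_le_div_iff₀ (by positivity) (by positivity)]
  calc 3 * A * R * (L ^ 2 * (L + R) ^ 2) = A * R * L ^ 2 * (3 * (L + R) ^ 2) := by ring
    _ ≤ A * R * L ^ 2 * (4 * (2 * L + R) * L) := by gcongr
    _ = A * R * (4 * (2 * L + R)) * L ^ 3 := by ring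

lemma gap_le_div_sub_sq_sub {A L R : ℝ} (hR : 0 ≤ R) (hLR : 0 < L - 2 * R) (hA : 0 ≤ A) :
    3 * A * R / L ^ 3 ≤ 4 * A / (L - 2 * R) ^ 2 - 4 * A / (L * (L - 2 * R)) := by
  have hL : 0 < L := by linarith
  calc 3 * A * R / L ^ 3 ≤ 8 * A * R / (L * (L - 2 * R) ^ 2) := by
        rw [pow_succ' L 2]
        gcongr
        · norm_num
        · linarith
    _ = 4 * A / (L - 2 * R) ^ 2 - 4 * A / (L * (L - 2 * R)) := by
        field_simp
        ring

lemma two_sided_bound_of_abs_sub_le {n w A B L R : ℝ} (hR : 0 ≤ R) (hLR : 2 * R + 4 ≤ L)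
    (hA : 0 ≤ A) (hB : 0 ≤ B) (hw : w ∈ Icc (n * (L * (L - 2 * R) / 4)) (n * (L ^ 2 / 4)))
    (hwA : |w - A| ≤ L * (B + 3 * A * R / L ^ 3)) :
    4 * A / (L + R) ^ 2 - B ≤ n ∧ n ≤ 4 * A / (L - 2 * R) ^ 2 + B := by
  have hL : 0 < L := by linarith
  have hM : 0 < L - 2 * R := by linarith
  set D := B + 3 * A * R / L ^ 3
  have hD0 : 0 ≤ D := by positivity
  obtain ⟨hge, hle⟩ := abs_le.mp hwA
  have hgap_lower := gap_le_sub_div_add_sq hR hL (by linarith) hA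
  have hgap_upper := gap_le_div_sub_sq_sub hR hM hA
  constructor
  · have hn : 4 * A / L ^ 2 - 4 / L * D ≤ n := by
      rw [show 4 * A / L ^ 2 - 4 / L * D = 4 * (A - L * D) / L ^ 2 by field_simp,
        div_le_iff₀ (by positivity)]
      linarith [hw.2]
    have hfrac : 4 / L * D ≤ D := mul_le_of_le_one_left hD0 ((div_le_one hL).mpr (by linarith))
    linarith
  · have hn : n ≤ 4 * A / (L * (L - 2 * R)) + 4 / (L - 2 * R) * D := by
      rw [show 4 * A / (L * (L - 2 * R)) + 4 / (L - 2 * R) * D =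
        4 * (A + L * D) / (L * (L - 2 * R)) by field_simp, le_div_iff₀ (by positivity)]
      linarith [hw.1]
    have hfrac : 4 / (L - 2 * R) * D ≤ D :=
      mul_le_of_le_one_left hD0 ((div_le_one hM).mpr (by linarith))
    linarith

lemma exists_mem_Icc_abs_sub_mul_le {n M l h E : ℝ} (hM : 0 < M) (hE : 0 ≤ E) (hlh : l ≤ h)
    (hlower : l * M - E ≤ n) (hupper : n ≤ h * M + E) : ∃ a ∈ Icc l h, |n - a * M| ≤ E := by
  refine ⟨projIcc l h hlh (n / M), Subtype.coe_prop _, ?_⟩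
  rcases le_or_gt (n / M) l with hl | hl
  · rw [projIcc_of_le_left hlh hl, abs_le]
    rw [div_le_iff₀ hM] at hl
    constructor <;> linarith
  rcases le_or_gt h (n / M) with hh | hh
  · rw [projIcc_of_right_le hlh hh, abs_le]
    rw [le_div_iff₀ hM] at hh
    constructor <;> linarith
  · rw [projIcc_of_mem hlh ⟨hl.le, hh.le⟩, div_mul_cancel₀ _ hM.ne', sub_self, abs_zero]
    exact hE

lemma two_mul_log_lt_log (hr : 0 < r) (hrx : r ^ 2 < x) : 2 * Real.log r < Real.log x := by
  simpa using Real.log_lt_log (by positivity) hrx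

lemma log_sub_log_div_nonneg (hr : 1 ≤ r) : 0 ≤ Real.log r - Real.log r / r :=
  sub_nonneg.mpr (div_le_self (Real.log_nonneg hr) hr)

lemma two_mul_log_add_four_le_log (hr : 0 < r) (hrx : 8 * r ≤ √x) :
    2 * Real.log r + 4 ≤ Real.log x := by
  have hx : 0 < x := Real.sqrt_pos.mp (by linarith)
  have hlog : Real.log (8 * r) ≤ Real.log √x := Real.log_le_log (by positivity) hrx
  have hlog8 : 2 ≤ Real.log 8 := by
    rw [show (8 : ℝ) = 2 ^ 3 by norm_num, Real.log_pow]
    push_cast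
    linarith [Real.log_two_gt_d9]
  rw [Real.log_mul (by norm_num) hr.ne', Real.log_sqrt hx.le] at hlog
  linarith

lemma le_three_mul_rpow_of_sqrt_lt (hr : 0 < r) (hx : 0 < x) (hrx : √x < 8 * r) :
    x ≤ 3 * (x ^ (3 / 4 : ℝ) * r ^ (1 / 2 : ℝ)) := by
  have hroot : x ^ (1 / 4 : ℝ) ≤ 3 * r ^ (1 / 2 : ℝ) := by
    calc x ^ (1 / 4 : ℝ) = √(√x) := by
          rw [Real.sqrt_eq_rpow, Real.sqrt_eq_rpow, ← Real.rpow_mul hx.le]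
          norm_num
      _ ≤ √(3 ^ 2 * r) := Real.sqrt_le_sqrt (by linarith)
      _ = 3 * r ^ (1 / 2 : ℝ) := by
          rw [Real.sqrt_mul (by norm_num), Real.sqrt_sq (by norm_num), Real.sqrt_eq_rpow]
  calc x = x ^ (3 / 4 : ℝ) * x ^ (1 / 4 : ℝ) := by
        rw [← Real.rpow_add hx]
        norm_num
    _ ≤ x ^ (3 / 4 : ℝ) * (3 * r ^ (1 / 2 : ℝ)) := by gcongr
    _ = 3 * (x ^ (3 / 4 : ℝ) * r ^ (1 / 2 : ℝ)) := by ring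

lemma four_mul_main_term_div_le (hr : 1 < r) (hx : 0 ≤ x)
    (hL : 2 * Real.log r ≤ Real.log x) :
    4 * (x * (Real.log r - Real.log r / r)) / (Real.log x + Real.log r) ^ 2 ≤ x := by
  have hr0 : 0 < r := zero_lt_one.trans hr
  have hR : 0 < Real.log r := Real.log_pos hr
  have hlam : 1 - r⁻¹ ≤ Real.log r := Real.one_sub_inv_le_log_of_pos hr0
  have hsum : 2 * Real.log r ≤ Real.log x + Real.log r := by linarith
  rw [div_le_iff₀ (pow_pos (by linarith) 2)]
  calc 4 * (x * (Real.log r - Real.log r / r)) = x * (4 * (Real.log r * (1 - r⁻¹))) := by ring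
    _ ≤ x * (4 * (Real.log r * Real.log r)) := by gcongr
    _ = x * (2 * Real.log r) ^ 2 := by ring
    _ ≤ x * (Real.log x + Real.log r) ^ 2 := by gcongr

lemma exists_NDM_two_sided_bound (hRH : RiemannHypothesis) :
    ∃ C : ℝ, 0 < C ∧ ∀ r x : ℝ, 1 < r → r ^ 2 < x →
      4 * (x * (Real.log r - Real.log r / r)) / (Real.log x + Real.log r) ^ 2 -
          C * (x ^ (3 / 4 : ℝ) * r ^ (1 / 2 : ℝ)) ≤ NDM r x ∧
        NDM r x ≤ 4 * (x * (Real.log r - Real.log r / r)) / (Real.log x - 2 * Real.log r) ^ 2 +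
          C * (x ^ (3 / 4 : ℝ) * r ^ (1 / 2 : ℝ)) := by
  obtain ⟨B, hB, hbound⟩ := exists_abs_deWegerLogSum_sub_le hRH
  refine ⟨B + 6, by positivity, fun r x hr hrx => ?_⟩
  have hr0 : 0 < r := zero_lt_one.trans hr
  have hx : 0 < x := (sq_pos_of_pos hr0).trans hrx
  have hR : 0 < Real.log r := Real.log_pos hr
  have hL := two_mul_log_lt_log hr0 hrx
  have hA : 0 ≤ x * (Real.log r - Real.log r / r) :=
    mul_nonneg hx.le (log_sub_log_div_nonneg hr.le)
  set z := x ^ (3 / 4 : ℝ) * r ^ (1 / 2 : ℝ)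
  have hz : 0 ≤ z := by positivity
  rcases le_or_gt (8 * r) √x with hlarge | hsmall
  · have hP : 1 ≤ √x / r := (one_le_div hr0).mpr (by linarith)
    have hLR := two_mul_log_add_four_le_log hr0 hlarge
    obtain ⟨hlower, hupper⟩ := two_sided_bound_of_abs_sub_le hR.le hLR hA (by positivity)
      (deWegerLogSum_mem_Icc hr.le hx.le hL.le) (hbound r x hr.le hP (by linarith))
    constructor <;> linarith
  · have hxz : x ≤ 3 * z := le_three_mul_rpow_of_sqrt_lt hr0 hx hsmall
    have hBz : 0 ≤ B * z := by positivity
    have hmain := four_mul_main_term_div_le hr hx.le hL.le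
    have hterm : 0 ≤ 4 * (x * (Real.log r - Real.log r / r)) /
      (Real.log x - 2 * Real.log r) ^ 2 := by positivity
    constructor
    · linarith [(NDM r x).cast_nonneg (α := ℝ)]
    · linarith [NDM_le_two_mul (r := r) hx.le]

end Bounds

end

theorem NDM_asymptotics_general (hRH : RiemannHypothesis) :
    ∃ C : ℝ, 0 < C ∧ ∀ r x : ℝ, 1 < r → r ^ 2 < x →
      ∃ atil ∈ Set.Icc ((1 - Real.log r / (Real.log x + Real.log r)) ^ 2)
                       ((1 + 2 * Real.log r / (Real.log x - 2 * Real.log r)) ^ 2),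
        |(NDM r x : ℝ)
            - atil * (4 * x / (Real.log x) ^ 2) * (Real.log r - Real.log r / r)|
          ≤ C * x ^ ((3 : ℝ) / 4) * r ^ ((1 : ℝ) / 2) := by
  obtain ⟨C, hC, hbound⟩ := exists_NDM_two_sided_bound hRH
  refine ⟨C, hC, fun r x hr hrx => ?_⟩
  have hr0 : 0 < r := zero_lt_one.trans hr
  have hx : 0 < x := (sq_pos_of_pos hr0).trans hrx
  have hR : 0 < Real.log r := Real.log_pos hr
  have hLR : 0 < Real.log x - 2 * Real.log r := sub_pos.mpr (two_mul_log_lt_log hr0 hrx)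
  have hL : 0 < Real.log x := by linarith
  have hlam : 0 < Real.log r - Real.log r / r := sub_pos.mpr (div_lt_self hR hr)
  obtain ⟨hlower, hupper⟩ := hbound r x hr hrx
  have hleft : 1 - Real.log r / (Real.log x + Real.log r) =
    Real.log x / (Real.log x + Real.log r) := by field_simp; ring
  have hright : 1 + 2 * Real.log r / (Real.log x - 2 * Real.log r) =
    Real.log x / (Real.log x - 2 * Real.log r) := by field_simp; ring
  simp only [hleft, hright, mul_assoc _ (4 * x / Real.log x ^ 2), mul_assoc C]
  refine exists_mem_Icc_abs_sub_mul_le (by positivity) (by positivity) ?_ ?_ ?_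
  · gcongr
    linarith
  · convert hlower using 2
    field_simp
  · convert hupper using 2
    field_simp

/-- Theorem 4.2 of the paper (count of de Weger RSA integers, under RH). -/
theorem NDM_asymptotics (hRH : RiemannHypothesis) :
    ∃ C : ℝ, 0 < C ∧ ∀ r x : ℝ, 1 < r → 2 * Real.log r < Real.log x →
      (2657 : ℝ) ≤ Real.sqrt x / r →
      ∃ atil ∈ Set.Icc ((1 - Real.log r / (Real.log x + Real.log r)) ^ 2)
                       ((1 + 2 * Real.log r / (Real.log x - 2 * Real.log r)) ^ 2),
        |(NDM r x : ℝ)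
            - atil * (4 * x / (Real.log x) ^ 2) * (Real.log r - Real.log r / r)|
          ≤ C * x ^ ((3 : ℝ) / 4) * r ^ ((1 : ℝ) / 2) := by
  obtain ⟨C, hC, hbound⟩ := NDM_asymptotics_general hRH
  refine ⟨C, hC, fun r x hr _ hP => hbound r x hr ?_⟩
  have hr0 : 0 < r := zero_lt_one.trans hr
  exact (Real.lt_sqrt hr0.le).mp ((one_lt_div hr0).mp (by linarith))
end
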